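/- arXiv:1902.05221 — 3 statements merged into one kernel-verified Lean document; each statement's English description precedes it below -/
import Mathlib

section
/- Weighted decay improvement for the Euclidean Laplacian (model case of the elliptic weight-shift lemma): let n ≥ 3, let s ≥ 2 be an integer with s > n/2, and let δ_q, δ̃ be real numbers with δ_q > −n/2 and δ_q ≤ δ̃ < n/2 − 2. If u : ℝ^n → ℝ is of class C^s with finite H_{s,δ_q}-norm and its Laplacian Δu = Σ_{i=1}^n ∂²u/∂x_i² has finite H_{s−2,δ̃+2}-norm, then u has finite H_{s,δ̃}-norm. -/
/-!
The proof is an energy argument. Write `J = 1 + ‖x‖²` and `c = (n - 2) / 2`.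

*Decay of `u`.* For a radial weight `W` with `∂ᵢW = 2 m xᵢ W`, the divergence of the vector field
`W u (∂ᵢu + c xᵢ u / J)` is at least `W (u Δu + (c² - (m J)²) u² / J)`, by completing the square
(`hardy_pointwise`): this is the weighted Hardy inequality with its optimal constant. Take
`W = J^(δt + 1) (1 + ε‖x‖²)^(-(δt - δq))` (`wt`). Then `m J` lies between `δq + 1` and `δt + 1`,
and the hypotheses `-n/2 < δq ≤ δt < n/2 - 2` say exactly that both are smaller than `c` in absolute
value. For fixed `ε` the weight grows only like
`J^(δq + 1)`, so the a priori norm of `u` makes the boundary terms vanish, while `W ≤ J^(δt + 1)`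
bounds the right hand side by the weighted norm of `Δu` independently of `ε` (`decay_step`). Letting
`ε → 0` with Fatou's lemma gives `u² J^δt ∈ L¹` (`decay_estimate`).

*Derivatives.* Once `u` has the improved decay, a weighted Caccioppoli inequality controls `∇u`
(`gradient_estimate`), and the identity `∫ ∂ᵢf ∂ⱼg = ∫ ∂ⱼf ∂ᵢg`, applied to the truncated components
of the gradient, controls the Hessian by `∇u` and `Δu` (`hessian_estimate`). Since `u` may be only
`C²`, that identity is needed for `C¹` functions (`integral_pd_swap`). Derivatives of order above two
follow by induction, because `∂ᵢu` solves `Δ(∂ᵢu) = ∂ᵢ(Δu)` (`higher_estimate`).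
-/

open MeasureTheory

/-- `u` has finite weighted Sobolev `H_{s,δ}`-norm on `ℝⁿ`: for every `m ≤ s` the
weighted integral of `‖Dᵐu‖²` with weight `(1+‖x‖²)^(m+δ)` is finite. -/
def FiniteHNorm (n : ℕ) {F : Type*} [NormedAddCommGroup F] [NormedSpace ℝ F]
    (s : ℕ) (δ : ℝ) (u : EuclideanSpace ℝ (Fin n) → F) : Prop :=
  ∀ m ≤ s, Integrable (fun x : EuclideanSpace ℝ (Fin n) =>
    ‖iteratedFDeriv ℝ m u x‖ ^ 2 * (1 + ‖x‖ ^ 2) ^ ((m : ℝ) + δ))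

/-- The Euclidean Laplacian `Δu = Σᵢ ∂²u/∂xᵢ²` of `u : ℝⁿ → ℝ`. -/
noncomputable def lap (n : ℕ) (u : EuclideanSpace ℝ (Fin n) → ℝ)
    (x : EuclideanSpace ℝ (Fin n)) : ℝ :=
  ∑ i : Fin n, iteratedFDeriv ℝ 2 u x (fun _ => EuclideanSpace.single i (1 : ℝ))

namespace WeightedLaplace

open Filter Topology

/-! ### Partial derivatives and integration by parts -/

/-- Euclidean `n`-space. -/
abbrev Eu (n : ℕ) := EuclideanSpace ℝ (Fin n)

/-- The partial derivative `∂f/∂xᵢ`. -/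
noncomputable def pd {n : ℕ} (i : Fin n) (f : Eu n → ℝ) (x : Eu n) : ℝ :=
  fderiv ℝ f x (EuclideanSpace.single i 1)

variable {n : ℕ}

lemma pd_contDiff {k m : WithTop ℕ∞} {f : Eu n → ℝ} (hf : ContDiff ℝ m f) (h : k + 1 ≤ m)
    (i : Fin n) : ContDiff ℝ k (pd i f) :=
  (hf.fderiv_right h).clm_apply contDiff_const

lemma pd_continuous {f : Eu n → ℝ} (hf : ContDiff ℝ 1 f) (i : Fin n) : Continuous (pd i f) :=
  (pd_contDiff (k := 0) hf (by simp) i).continuous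

lemma pd_compact {f : Eu n → ℝ} (hf : HasCompactSupport f) (i : Fin n) :
    HasCompactSupport (pd i f) := hf.fderiv_apply ℝ _

lemma pd_mul {f g : Eu n → ℝ} (hf : ContDiff ℝ 1 f) (hg : ContDiff ℝ 1 g) (i : Fin n) (x : Eu n) :
    pd i (fun y => f y * g y) x = pd i f x * g x + f x * pd i g x := by
  unfold pd
  rw [fderiv_fun_mul (hf.differentiable one_ne_zero x) (hg.differentiable one_ne_zero x)]
  simp
  ring

lemma pd_add_const_mul {f g : Eu n → ℝ} (hf : ContDiff ℝ 1 f) (hg : ContDiff ℝ 1 g) (c : ℝ)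
    (i : Fin n) (x : Eu n) : pd i (fun y => f y + c * g y) x = pd i f x + c * pd i g x := by
  unfold pd
  rw [fderiv_fun_add (hf.differentiable one_ne_zero x)
    ((hg.differentiable one_ne_zero x).const_mul c),
    fderiv_const_mul (hg.differentiable one_ne_zero x)]
  simp

lemma pd_comm {f : Eu n → ℝ} (hf : ContDiff ℝ 2 f) (i j : Fin n) (x : Eu n) :
    pd i (pd j f) x = pd j (pd i f) x := by
  have hd : DifferentiableAt ℝ (fderiv ℝ f) x :=
    (hf.fderiv_right (m := 1) (by norm_num)).differentiable one_ne_zero x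
  have hs : IsSymmSndFDerivAt ℝ f x := hf.contDiffAt.isSymmSndFDerivAt (by simp)
  unfold pd
  rw [fderiv_clm_apply hd (differentiableAt_const _), fderiv_clm_apply hd (differentiableAt_const _)]
  simpa using hs.eq _ _

lemma lap_eq {f : Eu n → ℝ} (hf : ContDiff ℝ 2 f) (x : Eu n) :
    lap n f x = ∑ i, pd i (pd i f) x := by
  have hd : DifferentiableAt ℝ (fderiv ℝ f) x :=
    (hf.fderiv_right (m := 1) (by norm_num)).differentiable one_ne_zero x
  unfold lap pd
  refine Finset.sum_congr rfl fun i _ => ?_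
  rw [fderiv_clm_apply hd (differentiableAt_const _), iteratedFDeriv_two_apply]
  simp

lemma lap_contDiff {k m : WithTop ℕ∞} {f : Eu n → ℝ} (hf : ContDiff ℝ m f) (h : k + 1 + 1 ≤ m) :
    ContDiff ℝ k (lap n f) := by
  have h2 : ContDiff ℝ 2 f := hf.of_le (le_trans (by
    have : (0 : WithTop ℕ∞) + 1 + 1 ≤ k + 1 + 1 := by gcongr; simp
    simpa [one_add_one_eq_two] using this) h)
  rw [show lap n f = fun x => ∑ i, pd i (pd i f) x from funext (lap_eq h2)]
  exact ContDiff.sum fun i _ => pd_contDiff (pd_contDiff hf h i) le_rfl i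

lemma pd_sum {ι : Type*} (s : Finset ι) {f : ι → Eu n → ℝ} (hf : ∀ j ∈ s, ContDiff ℝ 1 (f j))
    (i : Fin n) (x : Eu n) : pd i (fun y => ∑ j ∈ s, f j y) x = ∑ j ∈ s, pd i (f j) x := by
  unfold pd
  rw [fderiv_fun_sum fun j hj => (hf j hj).differentiable one_ne_zero x]
  simp

lemma lap_pd {f : Eu n → ℝ} (hf : ContDiff ℝ 3 f) (i : Fin n) (x : Eu n) :
    lap n (pd i f) x = pd i (lap n f) x := by
  have h2 : ContDiff ℝ 2 f := hf.of_le (by norm_num)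
  have h3 (j : Fin n) : ContDiff ℝ 2 (pd j f) := pd_contDiff hf (by norm_num) j
  rw [show lap n f = fun x => ∑ i, pd i (pd i f) x from funext (lap_eq h2),
    lap_eq (h3 i), pd_sum _ fun j _ => pd_contDiff (h3 j) (by norm_num) j]
  refine Finset.sum_congr rfl fun j _ => ?_
  rw [pd_comm (h3 j), show pd j (pd i f) = pd i (pd j f) from funext (pd_comm h2 j i)]

/-- Integration by parts against a compactly supported function. -/
lemma integral_pd_mul {f g : Eu n → ℝ} (hf : ContDiff ℝ 1 f) (hg : ContDiff ℝ 1 g)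
    (hc : HasCompactSupport f) (i : Fin n) :
    ∫ x, pd i f x * g x = -∫ x, f x * pd i g x := by
  have := integral_mul_fderiv_eq_neg_fderiv_mul_of_integrable (μ := (volume : Measure (Eu n)))
    (f := f) (g := g) (v := EuclideanSpace.single i 1)
    (((pd_continuous hf i).mul hg.continuous).integrable_of_hasCompactSupport
      (pd_compact hc i).mul_right)
    ((hf.continuous.mul (pd_continuous hg i)).integrable_of_hasCompactSupport hc.mul_right)
    ((hf.continuous.mul hg.continuous).integrable_of_hasCompactSupport hc.mul_right)
    (fun x _ => hf.differentiable one_ne_zero x) (fun x _ => hg.differentiable one_ne_zero x)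
  simp only [pd]
  linarith

/-- Differentiation under the integral sign for a correlation `∫ p(x) g(x + t v) dx`. -/
lemma hasDerivAt_integral_translate {p g : Eu n → ℝ} (hp : Continuous p)
    (hpc : HasCompactSupport p) (hg : ContDiff ℝ 1 g) (hgc : HasCompactSupport g) (v : Eu n) :
    HasDerivAt (fun t : ℝ => ∫ x, p x * g (x + t • v)) (∫ x, p x * fderiv ℝ g x v) 0 := by
  obtain ⟨C, hC⟩ := (hg.continuous_fderiv one_ne_zero).bounded_above_of_compact_support (hgc.fderiv ℝ)
  have key := hasDerivAt_integral_of_dominated_loc_of_deriv_le (μ := (volume : Measure (Eu n)))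
    (bound := fun x => ‖p x‖ * (C * ‖v‖)) (F := fun t x => p x * g (x + t • v)) (x₀ := (0 : ℝ))
    (F' := fun t x => p x * fderiv ℝ g (x + t • v) v) (s := Set.univ) univ_mem
    (Eventually.of_forall fun t =>
      (hp.mul (hg.continuous.comp (by fun_prop))).aestronglyMeasurable)
    ((hp.mul (hg.continuous.comp (by fun_prop))).integrable_of_hasCompactSupport hpc.mul_right)
    ((hp.mul (((hg.continuous_fderiv one_ne_zero).comp (by fun_prop)).clm_apply
      continuous_const)).aestronglyMeasurable)
    (Eventually.of_forall fun x t _ => by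
      rw [norm_mul]
      gcongr
      exact (ContinuousLinearMap.le_opNorm _ _).trans (by gcongr; exact hC _))
    ((hp.norm.mul continuous_const).integrable_of_hasCompactSupport hpc.norm.mul_right)
    (Eventually.of_forall fun x t _ => by
      have h1 : HasDerivAt (fun t : ℝ => x + t • v) v t := by
        simpa using ((hasDerivAt_id t).smul_const v).const_add x
      have h2 := ((hg.differentiable one_ne_zero (x + t • v)).hasFDerivAt.comp_hasDerivAt t h1)
      exact h2.const_mul (p x))
  simpa using key.2

/-- For `f, g ∈ C¹_c` the two partial derivatives in `∫ ∂ᵢf ∂ⱼg` may be interchanged. No second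
derivatives are available; instead both sides are the derivative at `t = 0` of
`t ↦ ∫ ∂ᵢf(x) g(x + t eⱼ) dx = -∫ f(x - t eⱼ) ∂ᵢg(x) dx`. -/
lemma integral_pd_swap {f g : Eu n → ℝ} (hf : ContDiff ℝ 1 f) (hg : ContDiff ℝ 1 g)
    (hfc : HasCompactSupport f) (hgc : HasCompactSupport g) (i j : Fin n) :
    ∫ x, pd i f x * pd j g x = ∫ x, pd j f x * pd i g x := by
  set v : Eu n := EuclideanSpace.single j 1
  have h1 := hasDerivAt_integral_translate (pd_continuous hf i) (pd_compact hfc i) hg hgc v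
  have h2 := hasDerivAt_integral_translate (pd_continuous hg i) (pd_compact hgc i) hf hfc (-v)
  have heq : (fun t : ℝ => ∫ x, pd i f x * g (x + t • v)) =
      fun t : ℝ => -∫ x, pd i g x * f (x + t • (-v)) := by
    funext t
    have hgt : ContDiff ℝ 1 fun x => g (x + t • v) := hg.comp (by fun_prop)
    rw [integral_pd_mul hf hgt hfc i,
      ← integral_add_right_eq_self (fun x => pd i g x * f (x + t • (-v))) (t • v)]
    congr 1
    refine integral_congr_ae (Eventually.of_forall fun x => ?_)
    have : pd i (fun x => g (x + t • v)) x = pd i g (x + t • v) := by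
      unfold pd
      rw [fderiv_comp_add_right]
    simp [this, mul_comm]
  rw [heq] at h1
  have := h1.unique h2.neg
  have hL : ∫ x, pd i f x * pd j g x = ∫ x, pd i f x * fderiv ℝ g x v := rfl
  rw [hL, this, ← integral_neg]
  refine integral_congr_ae (Eventually.of_forall fun x => ?_)
  simp [pd, v, mul_comm]

lemma integral_pd_eq_zero {f : Eu n → ℝ} (hf : ContDiff ℝ 1 f) (hc : HasCompactSupport f)
    (i : Fin n) : ∫ x, pd i f x = 0 := by
  have h := integral_pd_mul hf (contDiff_const (c := (1 : ℝ))) hc i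
  simpa [pd] using h

/-! ### Weights and cutoffs -/

/-- The squared Japanese bracket `1 + ‖x‖²`. -/
noncomputable def jb (x : Eu n) : ℝ := 1 + ‖x‖ ^ 2

lemma jb_ge_one (x : Eu n) : 1 ≤ jb x := by unfold jb; nlinarith [sq_nonneg ‖x‖]

lemma jb_pos (x : Eu n) : 0 < jb x := one_pos.trans_le (jb_ge_one x)

lemma jb_contDiff : ContDiff ℝ 2 (jb : Eu n → ℝ) := contDiff_const.add (contDiff_norm_sq ℝ)

lemma jbp_contDiff (b : ℝ) : ContDiff ℝ 2 (fun x : Eu n => jb x ^ b) :=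
  jb_contDiff.rpow_const_of_ne fun x => (jb_pos x).ne'

lemma sum_sq_coord (x : Eu n) : ∑ i, x i ^ 2 = jb x - 1 := by
  simp [jb, EuclideanSpace.norm_sq_eq]

lemma coord_sq_le (x : Eu n) (i : Fin n) : x i ^ 2 ≤ jb x := by
  have := Finset.single_le_sum (f := fun i => x i ^ 2) (fun _ _ => sq_nonneg _) (Finset.mem_univ i)
  linarith [sum_sq_coord x]

/-- Radial chain rule `∂ᵢ (1 + ε‖x‖²)^b = 2bε xᵢ (1 + ε‖x‖²)^(b-1)`. -/
lemma pd_rpow {ε : ℝ} (hε : 0 ≤ ε) (b : ℝ) (i : Fin n) (x : Eu n) :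
    pd i (fun y => (1 + ε * ‖y‖ ^ 2) ^ b) x = 2 * b * ε * x i * (1 + ε * ‖x‖ ^ 2) ^ (b - 1) := by
  have hpos : 0 < 1 + ε * ‖x‖ ^ 2 := by positivity
  have h1 : HasFDerivAt (fun y : Eu n => 1 + ε * ‖y‖ ^ 2) (ε • ((2 : ℝ) • innerSL ℝ x)) x :=
    (((hasStrictFDerivAt_norm_sq x).hasFDerivAt.const_mul ε).const_add 1).congr_fderiv (by
      ext; simp)
  have h2 := h1.rpow_const (p := b) (Or.inl hpos.ne')
  unfold pd
  rw [h2.fderiv]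
  simp [EuclideanSpace.inner_single_right]
  ring

lemma pd_jbp (b : ℝ) (i : Fin n) (x : Eu n) :
    pd i (fun y => jb y ^ b) x = 2 * b * x i * jb x ^ (b - 1) := by
  simpa [jb] using pd_rpow zero_le_one b i x

/-- Smooth cutoffs exhausting `ℝⁿ` whose gradients are `O((1+‖x‖²)^(-1/2))`, uniformly: these are
the dilates `θ(x/(N+1))` of a fixed bump function `θ`. -/
lemma exists_cutoff : ∃ (χ : ℕ → Eu n → ℝ) (C : ℝ), 0 ≤ C ∧ (∀ N, ContDiff ℝ 2 (χ N)) ∧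
    (∀ N, HasCompactSupport (χ N)) ∧ (∀ N x, 0 ≤ χ N x) ∧ (∀ N x, χ N x ≤ 1) ∧
    (∀ x, ∀ᶠ N in atTop, χ N =ᶠ[𝓝 x] fun _ => 1) ∧
    ∀ N i x, pd i (χ N) x ^ 2 * jb x ≤ C := by
  let θ : ContDiffBump (0 : Eu n) := ⟨1, 2, one_pos, one_lt_two⟩
  have hθ : ContDiff ℝ 2 (θ : Eu n → ℝ) := θ.contDiff
  have hθc : HasCompactSupport (θ : Eu n → ℝ) := θ.hasCompactSupport
  have hbd (i : Fin n) : ∃ C, ∀ y, ‖pd i θ y ^ 2 * jb y‖ ≤ C := by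
    refine Continuous.bounded_above_of_compact_support
      (((pd_continuous (hθ.of_le one_le_two) i).pow 2).mul jb_contDiff.continuous) ?_
    have := pd_compact hθc i
    simp_rw [sq, mul_assoc]
    exact this.mul_right
  choose C hC using hbd
  have hC0 (i) : 0 ≤ C i := (norm_nonneg _).trans (hC i 0)
  refine ⟨fun N x => θ (((N : ℝ) + 1)⁻¹ • x), ∑ i, C i, Finset.sum_nonneg fun i _ => hC0 i,
    fun N => hθ.comp (contDiff_const_smul _), fun N => ?_, fun N x => θ.nonneg,
    fun N x => θ.le_one, fun x => ?_, fun N i x => ?_⟩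
  · exact hθc.comp_smul (by positivity)
  · obtain ⟨N₀, hN₀⟩ := exists_nat_gt ‖x‖
    filter_upwards [eventually_ge_atTop N₀] with N hN
    have hN' : (N₀ : ℝ) ≤ N := by exact_mod_cast hN
    have hx : x ∈ Metric.ball (0 : Eu n) (N + 1) := by
      rw [mem_ball_zero_iff]; linarith
    filter_upwards [Metric.isOpen_ball.mem_nhds hx] with y hy
    refine θ.one_of_mem_closedBall ?_
    rw [mem_ball_zero_iff] at hy
    rw [mem_closedBall_zero_iff, norm_smul, Real.norm_of_nonneg (by positivity)]
    change _ ≤ (1 : ℝ)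
    rw [inv_mul_le_iff₀ (by positivity)]
    linarith
  · set r : ℝ := ((N : ℝ) + 1)⁻¹
    have hr0 : 0 ≤ r := by positivity
    have hr1 : r ≤ 1 := inv_le_one_of_one_le₀ (by linarith [Nat.cast_nonneg (α := ℝ) N])
    have h1 : pd i (fun x => θ (r • x)) x = r * pd i θ (r • x) := by
      unfold pd
      rw [fderiv_comp_smul]
      simp
    have h2 : r ^ 2 * jb x ≤ jb (r • x) := by
      unfold jb
      rw [norm_smul, mul_pow, Real.norm_of_nonneg hr0]
      nlinarith
    have h3 := (le_abs_self _).trans (hC i (r • x))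
    have h4 := Finset.single_le_sum (f := C) (fun i _ => hC0 i) (Finset.mem_univ i)
    change pd i (fun x => θ (r • x)) x ^ 2 * jb x ≤ _
    rw [h1]
    nlinarith [mul_le_mul_of_nonneg_left h2 (sq_nonneg (pd i θ (r • x)))]

/-- Compactly supported truncations of the weight `(1+‖x‖²)^b`, with the gradient bound of the
untruncated weight. -/
lemma exists_weight (b : ℝ) : ∃ (ζ : ℕ → Eu n → ℝ) (C : ℝ), 0 ≤ C ∧ (∀ N, ContDiff ℝ 2 (ζ N)) ∧
    (∀ N, HasCompactSupport (ζ N)) ∧ (∀ N x, ζ N x ^ 2 ≤ jb x ^ (2 * b)) ∧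
    (∀ x, ∀ᶠ N in atTop, ζ N x ^ 2 = jb x ^ (2 * b)) ∧
    ∀ N i x, pd i (ζ N) x ^ 2 ≤ C * jb x ^ (2 * b - 1) := by
  obtain ⟨χ, C, hC, hχ, hχc, hχ0, hχ1, hχe, hχd⟩ := exists_cutoff (n := n)
  have hsq (x : Eu n) : (jb x ^ b) ^ 2 = jb x ^ (2 * b) := by
    rw [← Real.rpow_natCast, ← Real.rpow_mul (jb_pos x).le]
    norm_num [mul_comm]
  refine ⟨fun N x => χ N x * jb x ^ b, 2 * C + 8 * b ^ 2, by positivity,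
    fun N => (hχ N).mul (jbp_contDiff b), fun N => (hχc N).mul_right, fun N x => ?_, fun x => ?_,
    fun N i x => ?_⟩
  · rw [mul_pow, hsq]
    have := Real.rpow_nonneg (jb_pos x).le (2 * b)
    have h2 : χ N x ^ 2 ≤ 1 := pow_le_one₀ (hχ0 N x) (hχ1 N x)
    nlinarith
  · filter_upwards [hχe x] with N hN
    rw [hN.eq_of_nhds, one_mul, hsq]
  · rw [pd_mul ((hχ N).of_le one_le_two) ((jbp_contDiff b).of_le one_le_two), pd_jbp]
    set K := jb x ^ (b - 1) with hK
    have hJ := jb_pos x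
    have e1 : jb x ^ b = K * jb x := by
      rw [hK, ← Real.rpow_add_one hJ.ne']; ring_nf
    have e2 : jb x ^ (2 * b - 1) = K ^ 2 * jb x := by
      rw [hK, ← Real.rpow_natCast, ← Real.rpow_mul hJ.le, ← Real.rpow_add_one hJ.ne']
      norm_num; ring_nf
    rw [e1, e2]
    have h1 : (pd i (χ N) x * (K * jb x)) ^ 2 ≤ C * (K ^ 2 * jb x) := by
      have := mul_le_mul_of_nonneg_right (hχd N i x) (show 0 ≤ K ^ 2 * jb x by positivity)
      nlinarith
    have h2 : (χ N x * (2 * b * x i * K)) ^ 2 ≤ 4 * b ^ 2 * (K ^ 2 * jb x) := by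
      have a1 : χ N x ^ 2 ≤ 1 := pow_le_one₀ (hχ0 N x) (hχ1 N x)
      have a2 := mul_le_mul a1 (coord_sq_le x i) (sq_nonneg _) zero_le_one
      have := mul_le_mul_of_nonneg_left a2 (show 0 ≤ 4 * b ^ 2 * K ^ 2 by positivity)
      nlinarith
    nlinarith [sq_nonneg (pd i (χ N) x * (K * jb x) - χ N x * (2 * b * x i * K))]

/-- Fatou's lemma in the form used to remove cutoffs. -/
lemma integrable_of_bounded {g : Eu n → ℝ} (hg : Continuous g) (F : ℕ → Eu n → ℝ)
    (hF : ∀ N, Integrable (F N)) (h0 : ∀ N x, 0 ≤ F N x)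
    (hlim : ∀ x, Tendsto (fun N => F N x) atTop (𝓝 (g x))) (C : ℝ) (hC : ∀ N, ∫ x, F N x ≤ C) :
    Integrable g := by
  refine ⟨hg.aestronglyMeasurable, ?_⟩
  have h1 : ∀ N, ∫⁻ x, ‖F N x‖ₑ ≤ ENNReal.ofReal C := fun N => by
    rw [← ofReal_integral_norm_eq_lintegral_enorm (hF N)]
    simp_rw [Real.norm_of_nonneg (h0 N _)]
    exact ENNReal.ofReal_le_ofReal (hC N)
  calc ∫⁻ x, ‖g x‖ₑ = ∫⁻ x, liminf (fun N => ‖F N x‖ₑ) atTop :=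
        lintegral_congr fun x => (hlim x).enorm.liminf_eq.symm
    _ ≤ liminf (fun N => ∫⁻ x, ‖F N x‖ₑ) atTop :=
        lintegral_liminf_le' fun N => (hF N).1.enorm
    _ ≤ ENNReal.ofReal C := liminf_le_of_frequently_le' (Frequently.of_forall h1)
    _ < ⊤ := ENNReal.ofReal_lt_top

/-! ### Energy estimates for first and second derivatives -/

lemma integrable_compact {f : Eu n → ℝ} (hf : Continuous f) (hc : HasCompactSupport f) :
    Integrable f := hf.integrable_of_hasCompactSupport hc

lemma jbp_continuous (b : ℝ) : Continuous fun x : Eu n => jb x ^ b := (jbp_contDiff b).continuous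

lemma rpow_succ (x : Eu n) (a : ℝ) : jb x ^ (a + 1) = jb x ^ a * jb x :=
  Real.rpow_add_one (jb_pos x).ne' a

/-- Pointwise inequality behind the gradient estimate. -/
lemma gradient_pointwise {z C A J u D : ℝ} {d g h : Fin n → ℝ} (hA : 0 ≤ A)
    (hz : z ^ 2 ≤ A * J) (hd : ∀ i, d i ^ 2 ≤ C * A) (hD : D = ∑ i, h i) :
    z ^ 2 * ∑ i, g i ^ 2 ≤
      2 * ∑ i, (d i * (z * (u * g i)) + z * (d i * (u * g i) + z * (g i * g i + u * h i)))
        + (A * u ^ 2 + A * J * J * D ^ 2 + 4 * n * C * (A * u ^ 2)) := by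
  have h1 : ∀ i ∈ Finset.univ, z ^ 2 * g i ^ 2 - 4 * C * (A * u ^ 2) + 2 * z ^ 2 * u * h i ≤
      2 * (d i * (z * (u * g i)) + z * (d i * (u * g i) + z * (g i * g i + u * h i))) := by
    intro i _
    have := mul_le_mul_of_nonneg_right (hd i) (sq_nonneg u)
    nlinarith [sq_nonneg (z * g i + 2 * (u * d i))]
  have h2 := Finset.sum_le_sum h1
  have e : ∑ i, (z ^ 2 * g i ^ 2 - 4 * C * (A * u ^ 2) + 2 * z ^ 2 * u * h i) =
      z ^ 2 * ∑ i, g i ^ 2 - n * (4 * C * (A * u ^ 2)) + 2 * z ^ 2 * u * D := by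
    simp [hD, Finset.sum_add_distrib, Finset.sum_sub_distrib, Finset.mul_sum]
  rw [e, ← Finset.mul_sum] at h2
  have h3 : -(2 * z ^ 2 * u * D) ≤ A * u ^ 2 + A * J * J * D ^ 2 := by
    have a1 : z ^ 2 * (2 * |u * D|) ≤ A * J * (2 * |u * D|) := by gcongr
    have a2 := mul_le_mul_of_nonneg_left (neg_le_abs (u * D)) (sq_nonneg z)
    have a3 : A * J * (2 * (|u| * |D|)) ≤ A * |u| ^ 2 + A * J * J * |D| ^ 2 := by
      have := mul_nonneg hA (sq_nonneg (|u| - J * |D|))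
      linarith
    rw [sq_abs, sq_abs, ← abs_mul] at a3
    linarith
  linarith

/-- Weighted Caccioppoli estimate: the gradient of `u` is controlled by `u` and `Δu`. -/
lemma gradient_estimate {u : Eu n → ℝ} (hu : ContDiff ℝ 2 u) (a : ℝ)
    (h0 : Integrable fun x => u x ^ 2 * jb x ^ a)
    (hL : Integrable fun x => lap n u x ^ 2 * jb x ^ (a + 2)) (i : Fin n) :
    Integrable fun x => pd i u x ^ 2 * jb x ^ (a + 1) := by
  obtain ⟨ζ, C, hC, hζ, hζc, hζle, hζe, hζd⟩ := exists_weight (n := n) ((a + 1) / 2)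
  have hb : 2 * ((a + 1) / 2) = a + 1 := by ring
  simp only [hb, add_sub_cancel_right] at hζle hζe hζd
  have hu1 := hu.of_le one_le_two
  have hg (i : Fin n) : ContDiff ℝ 1 (pd i u) := pd_contDiff hu (by norm_num) i
  have hζ1 (N) := (hζ N).of_le one_le_two
  let X (N : ℕ) (i : Fin n) (x : Eu n) : ℝ := ζ N x * (ζ N x * (u x * pd i u x))
  have hX (N i) : ContDiff ℝ 1 (X N i) := (hζ1 N).mul ((hζ1 N).mul (hu1.mul (hg i)))
  have hXc (N i) : HasCompactSupport (X N i) := (hζc N).mul_right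
  have hpX (N i x) : pd i (X N i) x = pd i (ζ N) x * (ζ N x * (u x * pd i u x)) +
      ζ N x * (pd i (ζ N) x * (u x * pd i u x) +
        ζ N x * (pd i u x * pd i u x + u x * pd i (pd i u) x)) := by
    change pd i (fun x => ζ N x * (ζ N x * (u x * pd i u x))) x = _
    rw [pd_mul (hζ1 N) ((hζ1 N).mul (hu1.mul (hg i))), pd_mul (hζ1 N) (hu1.mul (hg i)),
      pd_mul hu1 (hg i)]
  have hXi (N i) : Integrable (pd i (X N i)) :=
    integrable_compact (pd_continuous (hX N i) i) (pd_compact (hXc N i) i)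
  have hcont (b : ℝ) : Continuous fun x => (∑ i, pd i u x ^ 2) * jb x ^ b :=
    (continuous_finsetSum _ fun i _ => (hg i).continuous.pow 2).mul (jbp_continuous b)
  set R : Eu n → ℝ := fun x => u x ^ 2 * jb x ^ a + lap n u x ^ 2 * jb x ^ (a + 2) +
    4 * n * C * (u x ^ 2 * jb x ^ a) with hR
  have hRi : Integrable R := (h0.add hL).add (h0.const_mul _)
  have hFi (N) : Integrable fun x => ζ N x ^ 2 * ∑ i, pd i u x ^ 2 :=
    integrable_compact (((hζ N).continuous.pow 2).mul
      (continuous_finsetSum _ fun i _ => (hg i).continuous.pow 2))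
      (by simp_rw [sq, mul_assoc]; exact (hζc N).mul_right)
  have key : Integrable fun x => (∑ i, pd i u x ^ 2) * jb x ^ (a + 1) := by
    refine integrable_of_bounded (hcont _) (fun N x => ζ N x ^ 2 * ∑ i, pd i u x ^ 2) hFi
      (fun N x => mul_nonneg (sq_nonneg _) (Finset.sum_nonneg fun i _ => sq_nonneg _))
      (fun x => ?_) (∫ x, R x) (fun N => ?_)
    · refine tendsto_const_nhds.congr' ?_
      filter_upwards [hζe x] with N hN
      rw [hN, mul_comm]
    · have hs : ∫ x, 2 * ∑ i, pd i (X N i) x = 0 := by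
        rw [integral_const_mul, integral_finsetSum _ fun i _ => hXi N i]
        simp [integral_pd_eq_zero (hX N _) (hXc N _)]
      have hsi : Integrable fun x => 2 * ∑ i, pd i (X N i) x :=
        (integrable_finsetSum _ fun i _ => hXi N i).const_mul 2
      rw [← zero_add (∫ x, R x), ← hs, ← integral_add hsi hRi]
      refine integral_mono (hFi N) (hsi.add hRi) fun x => ?_
      have e2 : jb x ^ (a + 2) = jb x ^ a * jb x * jb x := by
        rw [← rpow_succ, ← rpow_succ]; ring_nf
      have := gradient_pointwise (u := u x) (g := fun i => pd i u x)
        (Real.rpow_nonneg (jb_pos x).le a)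
        (rpow_succ x a ▸ hζle N x) (fun i => hζd N i x) (lap_eq hu x)
      simp only [hR, hpX, e2]
      refine this.trans (le_of_eq ?_)
      ring
  refine key.mono' (((hg i).continuous.pow 2).mul (jbp_continuous _)).aestronglyMeasurable
    (Eventually.of_forall fun x => ?_)
  have hJ := Real.rpow_nonneg (jb_pos x).le (a + 1)
  rw [Real.norm_of_nonneg (by positivity)]
  gcongr
  exact Finset.single_le_sum (f := fun i => pd i u x ^ 2) (fun _ _ => sq_nonneg _)
    (Finset.mem_univ i)

/-- Pointwise inequality behind the Hessian estimate. -/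
lemma hessian_pointwise {z C B E : ℝ} {d w : Fin n → ℝ} {H : Fin n → Fin n → ℝ}
    (hE : z ^ 2 ≤ E) (hd : ∀ i, d i ^ 2 ≤ C * B) (hH : ∀ i j, H i j = H j i) :
    z ^ 2 * ∑ i, ∑ j, H i j ^ 2 ≤
      2 * ∑ i, ∑ j, ((d i * w j + z * H i j) * (d j * w i + z * H j i) -
        (d j * w j + z * H j j) * (d i * w i + z * H i i)) +
      (4 * (E * (∑ i, H i i) ^ 2) + 6 * n * C * (B * ∑ i, w i ^ 2)) := by
  have h1 : ∀ i j, z ^ 2 * H i j ^ 2 - C * B * w j ^ 2 - C * B * w i ^ 2 ≤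
      2 * ((d i * w j + z * H i j) * (d j * w i + z * H j i)) := by
    intro i j
    rw [← hH i j]
    have a1 := mul_le_mul_of_nonneg_right (hd i) (sq_nonneg (w j))
    have a2 := mul_le_mul_of_nonneg_right (hd j) (sq_nonneg (w i))
    nlinarith [sq_nonneg (z * H i j + d i * w j + d j * w i)]
  have h2 : ∑ i, ∑ j, (z ^ 2 * H i j ^ 2 - C * B * w j ^ 2 - C * B * w i ^ 2) ≤
      ∑ i, ∑ j, 2 * ((d i * w j + z * H i j) * (d j * w i + z * H j i)) :=
    Finset.sum_le_sum fun i _ => Finset.sum_le_sum fun j _ => h1 i j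
  simp only [Finset.sum_sub_distrib, ← Finset.mul_sum, Finset.sum_const, Finset.card_univ,
    Fintype.card_fin, nsmul_eq_mul] at h2
  have h3 : ∑ i, ∑ j, (d j * w j + z * H j j) * (d i * w i + z * H i i) =
      (z * ∑ i, H i i + ∑ i, d i * w i) ^ 2 := by
    rw [sq, add_comm, Finset.mul_sum, ← Finset.sum_add_distrib, Finset.sum_mul_sum,
      Finset.sum_comm]
  have h4 : (∑ i, d i * w i) ^ 2 ≤ n * C * B * ∑ i, w i ^ 2 := by
    refine (Finset.sum_mul_sq_le_sq_mul_sq _ _ _).trans ?_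
    gcongr
    calc ∑ i, d i ^ 2 ≤ ∑ _i : Fin n, C * B := Finset.sum_le_sum fun i _ => hd i
      _ = n * C * B := by simp [mul_assoc]
  have h5 := mul_le_mul_of_nonneg_right hE (sq_nonneg (∑ i, H i i))
  simp only [Finset.sum_sub_distrib]
  rw [h3]
  nlinarith [sq_nonneg (z * ∑ i, H i i - ∑ i, d i * w i)]

/-- Weighted second derivative estimate: the Hessian of `u` is controlled by the gradient of `u`
and `Δu`. Applying `integral_pd_swap` to the truncated gradient avoids third derivatives. -/
lemma hessian_estimate {u : Eu n → ℝ} (hu : ContDiff ℝ 2 u) (a : ℝ)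
    (h1 : ∀ i, Integrable fun x => pd i u x ^ 2 * jb x ^ (a + 1))
    (hL : Integrable fun x => lap n u x ^ 2 * jb x ^ (a + 2)) (i j : Fin n) :
    Integrable fun x => pd i (pd j u) x ^ 2 * jb x ^ (a + 2) := by
  obtain ⟨ζ, C, hC, hζ, hζc, hζle, hζe, hζd⟩ := exists_weight (n := n) ((a + 2) / 2)
  have hb : 2 * ((a + 2) / 2) = a + 2 := by ring
  have hb' : a + 2 - 1 = a + 1 := by ring
  simp only [hb, hb'] at hζle hζe hζd
  have hg (i : Fin n) : ContDiff ℝ 1 (pd i u) := pd_contDiff hu (by norm_num) i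
  have hζ1 (N) := (hζ N).of_le one_le_two
  let f (N : ℕ) (i : Fin n) (x : Eu n) : ℝ := ζ N x * pd i u x
  have hf (N i) : ContDiff ℝ 1 (f N i) := (hζ1 N).mul (hg i)
  have hfc (N i) : HasCompactSupport (f N i) := (hζc N).mul_right
  have hpf (N i j x) : pd i (f N j) x = pd i (ζ N) x * pd j u x + ζ N x * pd i (pd j u) x :=
    pd_mul (hζ1 N) (hg j) i x
  have hpi (N i j k l) : Integrable fun x => pd i (f N j) x * pd k (f N l) x :=
    integrable_compact ((pd_continuous (hf N j) i).mul (pd_continuous (hf N l) k))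
      (pd_compact (hfc N j) i).mul_right
  have hHc : Continuous fun x => ∑ i, ∑ j, pd i (pd j u) x ^ 2 :=
    continuous_finsetSum _ fun i _ => continuous_finsetSum _ fun j _ =>
      (pd_continuous (hg j) i).pow 2
  set R : Eu n → ℝ := fun x => 4 * (lap n u x ^ 2 * jb x ^ (a + 2)) +
    6 * n * C * (∑ i, pd i u x ^ 2 * jb x ^ (a + 1)) with hR
  have hRi : Integrable R := (hL.const_mul _).add ((integrable_finsetSum _ fun i _ => h1 i).const_mul _)
  have hFi (N) : Integrable fun x => ζ N x ^ 2 * ∑ i, ∑ j, pd i (pd j u) x ^ 2 :=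
    integrable_compact (((hζ N).continuous.pow 2).mul hHc)
      (by simp_rw [sq, mul_assoc]; exact (hζc N).mul_right)
  have key : Integrable fun x => (∑ i, ∑ j, pd i (pd j u) x ^ 2) * jb x ^ (a + 2) := by
    refine integrable_of_bounded (hHc.mul (jbp_continuous _)) _ hFi
      (fun N x => mul_nonneg (sq_nonneg _) (Finset.sum_nonneg fun i _ =>
        Finset.sum_nonneg fun j _ => sq_nonneg _))
      (fun x => ?_) (∫ x, R x) (fun N => ?_)
    · refine tendsto_const_nhds.congr' ?_
      filter_upwards [hζe x] with N hN
      rw [hN, mul_comm]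
    · have hdi (i j) : Integrable fun x => pd i (f N j) x * pd j (f N i) x -
          pd j (f N j) x * pd i (f N i) x := (hpi N i j j i).sub (hpi N j j i i)
      have hsi' (i) : Integrable fun x => ∑ j, (pd i (f N j) x * pd j (f N i) x -
          pd j (f N j) x * pd i (f N i) x) := integrable_finsetSum _ fun j _ => hdi i j
      have hsi : Integrable fun x => 2 * ∑ i, ∑ j, (pd i (f N j) x * pd j (f N i) x -
          pd j (f N j) x * pd i (f N i) x) :=
        (integrable_finsetSum _ fun i _ => hsi' i).const_mul 2
      have hs : ∫ x, 2 * ∑ i, ∑ j, (pd i (f N j) x * pd j (f N i) x -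
          pd j (f N j) x * pd i (f N i) x) = 0 := by
        rw [integral_const_mul, integral_finsetSum _ fun i _ => hsi' i]
        have hz (i) : ∫ x, ∑ j, (pd i (f N j) x * pd j (f N i) x -
            pd j (f N j) x * pd i (f N i) x) = 0 := by
          rw [integral_finsetSum _ fun j _ => hdi i j]
          refine Finset.sum_eq_zero fun j _ => ?_
          rw [integral_sub (hpi N i j j i) (hpi N j j i i),
            integral_pd_swap (hf N j) (hf N i) (hfc N j) (hfc N i) i j, sub_self]
        rw [Finset.sum_eq_zero fun i _ => hz i, mul_zero]
      rw [← zero_add (∫ x, R x), ← hs, ← integral_add hsi hRi]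
      refine integral_mono (hFi N) (hsi.add hRi) fun x => ?_
      have := hessian_pointwise (w := fun i => pd i u x) (H := fun i j => pd i (pd j u) x)
        (hζle N x) (fun i => hζd N i x) (fun i j => pd_comm hu i j x)
      simp only [hR, hpf, lap_eq hu x, ← Finset.sum_mul]
      refine this.trans (le_of_eq ?_)
      ring
  refine key.mono' (((pd_continuous (hg j) i).pow 2).mul (jbp_continuous _)).aestronglyMeasurable
    (Eventually.of_forall fun x => ?_)
  have hJ := Real.rpow_nonneg (jb_pos x).le (a + 2)
  rw [Real.norm_of_nonneg (by positivity)]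
  gcongr
  refine le_trans ?_ (Finset.single_le_sum (f := fun i => ∑ j, pd i (pd j u) x ^ 2)
    (fun _ _ => Finset.sum_nonneg fun _ _ => sq_nonneg _) (Finset.mem_univ i))
  exact Finset.single_le_sum (f := fun j => pd i (pd j u) x ^ 2) (fun _ _ => sq_nonneg _)
    (Finset.mem_univ j)

/-! ### Improvement of the decay of `u` -/

/-- The radial weight `(1+‖x‖²)^(δ+1) (1+ε‖x‖²)^(-η)`, which grows like `‖x‖^(2δ+2)` up to
`‖x‖ ≈ ε^(-1/2)` and like `‖x‖^(2(δ-η)+2)` beyond. -/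
noncomputable def wt (δ η ε : ℝ) (x : Eu n) : ℝ := jb x ^ (δ + 1) * (1 + ε * ‖x‖ ^ 2) ^ (-η)

lemma wt_contDiff (δ η : ℝ) {ε : ℝ} (hε : 0 ≤ ε) : ContDiff ℝ 2 (wt δ η ε : Eu n → ℝ) := by
  refine (jbp_contDiff _).mul (ContDiff.rpow_const_of_ne ?_ fun x => by positivity)
  exact contDiff_const.add (contDiff_const.mul (contDiff_norm_sq ℝ))

lemma wt_pos (δ η : ℝ) {ε : ℝ} (hε : 0 ≤ ε) (x : Eu n) : 0 < wt δ η ε x :=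
  mul_pos (Real.rpow_pos_of_pos (jb_pos x) _) (Real.rpow_pos_of_pos (by positivity) _)

lemma pd_wt (δ η : ℝ) {ε : ℝ} (hε : 0 ≤ ε) (i : Fin n) (x : Eu n) :
    pd i (wt δ η ε) x =
      2 * ((δ + 1) * (1 / jb x) - η * (ε / (1 + ε * ‖x‖ ^ 2))) * x i * wt δ η ε x := by
  have hJ := jb_pos x
  have hp : 0 < 1 + ε * ‖x‖ ^ 2 := by positivity
  have hc : ContDiff ℝ 1 fun y : Eu n => (1 + ε * ‖y‖ ^ 2) ^ (-η) := by
    refine ContDiff.rpow_const_of_ne ?_ fun x => by positivity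
    exact contDiff_const.add (contDiff_const.mul (contDiff_norm_sq ℝ))
  change pd i (fun y => jb y ^ (δ + 1) * (1 + ε * ‖y‖ ^ 2) ^ (-η)) x = _
  rw [pd_mul ((jbp_contDiff _).of_le one_le_two) hc, pd_jbp, pd_rpow hε,
    Real.rpow_sub_one hJ.ne', Real.rpow_sub_one hp.ne', wt]
  field_simp
  ring

/-- `Σᵢ ∂ᵢ(W u (∂ᵢu + c xᵢ u / (1+‖x‖²)))`, divided by `W`, bounded from below. Here `m`
is given by `∂ᵢW = 2 m xᵢ W`; completing the square in `∂ᵢu` is the weighted Hardy inequality, with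
optimal constant for `c = (n-2)/2`. -/
lemma hardy_pointwise {u J D m c k : ℝ} {X g h : Fin n → ℝ} (hJ : 0 < J) (hc : n = 2 * c + 2)
    (hc0 : 0 ≤ c) (hX : ∑ i, X i ^ 2 = J - 1) (hm : (m * J) ^ 2 ≤ k) (hD : D = ∑ i, h i) :
    u * D + (c ^ 2 - k) * (u ^ 2 / J) ≤
      ∑ i, (2 * m * X i * (u * (g i + c * (X i * (1 / J) * u))) +
        (g i * (g i + c * (X i * (1 / J) * u)) +
          u * (h i + c * ((1 / J - 2 * X i ^ 2 * (1 / J) ^ 2) * u + X i * (1 / J) * g i)))) := by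
  obtain ⟨y, hy⟩ : ∃ y, y = 1 / J := ⟨_, rfl⟩
  have hyJ : y * J = 1 := by rw [hy]; field_simp
  have hy0 : 0 < y := by rw [hy]; positivity
  have huJ : u ^ 2 / J = u ^ 2 * y := by rw [hy]; ring
  rw [← hy, huJ]
  have h1 : ∀ i ∈ Finset.univ, u * h i +
      (c * y * u ^ 2 - u ^ 2 * (m ^ 2 + c ^ 2 * y ^ 2 + 2 * c * y ^ 2) * X i ^ 2) ≤
      2 * m * X i * (u * (g i + c * (X i * y * u))) +
        (g i * (g i + c * (X i * y * u)) +
          u * (h i + c * ((y - 2 * X i ^ 2 * y ^ 2) * u + X i * y * g i))) := by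
    intro i _
    nlinarith [sq_nonneg (g i + (m + c * y) * u * X i)]
  refine le_trans ?_ (Finset.sum_le_sum h1)
  simp only [Finset.sum_add_distrib, Finset.sum_sub_distrib, ← Finset.mul_sum, ← hD, hX,
    Finset.sum_const, Finset.card_univ, Fintype.card_fin, nsmul_eq_mul, hc]
  have h2 : (m ^ 2 + c ^ 2 * y ^ 2 + 2 * c * y ^ 2) * (J - 1) ≤ (k + c ^ 2 + 2 * c) * y := by
    have a1 : m ^ 2 * J ≤ k * y := by
      have := mul_le_mul_of_nonneg_right hm hy0.le
      calc m ^ 2 * J = (m * J) ^ 2 * y := by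
            rw [mul_pow, sq J, mul_assoc, mul_assoc, mul_comm J y, hyJ, mul_one]
        _ ≤ k * y := this
    have a2 : (c ^ 2 + 2 * c) * y ^ 2 * J = (c ^ 2 + 2 * c) * y := by
      rw [sq y, mul_assoc, mul_assoc, hyJ, mul_one]
    have a3 : 0 ≤ m ^ 2 + c ^ 2 * y ^ 2 + 2 * c * y ^ 2 := by positivity
    linarith
  have h3 := mul_le_mul_of_nonneg_left h2 (sq_nonneg u)
  linarith

lemma slope_bound {J b p q c : ℝ} (hJ : 0 < J) (hb : 0 ≤ b) (hbJ : b ≤ 1 / J) (hp : |p| ≤ c)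
    (hq : |q| ≤ c) : ((q * (1 / J) - (q - p) * b) * J) ^ 2 ≤ c ^ 2 := by
  have hc : 0 ≤ c := (abs_nonneg _).trans hp
  have h1 : b * J ≤ 1 := by rwa [le_div_iff₀ hJ] at hbJ
  have h2 : (q * (1 / J) - (q - p) * b) * J = q * (1 - b * J) + p * (b * J) := by
    field_simp; ring
  have h0 : 0 ≤ b * J := by positivity
  rw [abs_le] at hp hq
  rw [h2]
  apply sq_le_sq'
  · nlinarith
  · nlinarith

/-- The a priori estimate with the weight `wt`, whose constant does not depend on `ε`: for every `ε`
the boundary term of the truncation `χ N` is at most `1` once `N` is large. -/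
lemma decay_step {χ : ℕ → Eu n → ℝ} {C : ℝ} (hχ : ∀ N, ContDiff ℝ 2 (χ N))
    (hχc : ∀ N, HasCompactSupport (χ N)) (hχ0 : ∀ N x, 0 ≤ χ N x) (hχ1 : ∀ N x, χ N x ≤ 1)
    (hχe : ∀ x, ∀ᶠ N in atTop, χ N =ᶠ[𝓝 x] fun _ => 1)
    (hχd : ∀ N i x, pd i (χ N) x ^ 2 * jb x ≤ C)
    {δq δt c κ : ℝ} (hc : n = 2 * c + 2) (hc0 : 0 ≤ c) (hκ : κ ^ 2 < c ^ 2)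
    (hq : |δq + 1| ≤ κ) (ht : |δt + 1| ≤ κ) (hle : δq ≤ δt) {u : Eu n → ℝ} (hu : ContDiff ℝ 2 u)
    (h0 : Integrable fun x => u x ^ 2 * jb x ^ δq)
    (h1 : ∀ i, Integrable fun x => pd i u x ^ 2 * jb x ^ (δq + 1))
    (hL : Integrable fun x => lap n u x ^ 2 * jb x ^ (δt + 2))
    {ε : ℝ} (hε : 0 < ε) (hε1 : ε ≤ 1) :
    ∀ᶠ N in atTop, ∫ x, χ N x * (wt δt (δt - δq) ε x * (u x ^ 2 * (1 / jb x))) ≤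
      2 / (c ^ 2 - κ ^ 2) *
        (1 / (2 * (c ^ 2 - κ ^ 2)) * (∫ x, lap n u x ^ 2 * jb x ^ (δt + 2)) + 1) := by
  set W : Eu n → ℝ := wt δt (δt - δq) ε with hW
  set γ := c ^ 2 - κ ^ 2 with hγ
  have hγ0 : 0 < γ := sub_pos.2 hκ
  have hWC : ContDiff ℝ 1 W := (wt_contDiff _ _ hε.le).of_le one_le_two
  have hWp (x) : 0 < W x := wt_pos _ _ hε.le x
  have hu1 := hu.of_le one_le_two
  have hg (i : Fin n) : ContDiff ℝ 1 (pd i u) := pd_contDiff hu (by norm_num) i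
  have hη : 0 ≤ δt - δq := sub_nonneg.2 hle
  -- the two bounds on the weight
  have hW1 (x) : W x ≤ jb x ^ (δt + 1) := by
    have := jb_pos x
    exact mul_le_of_le_one_right (by positivity)
      (Real.rpow_le_one_of_one_le_of_nonpos (by nlinarith [sq_nonneg ‖x‖]) (by linarith))
  have hW2 (x) : W x ≤ ε ^ (-(δt - δq)) * jb x ^ (δq + 1) := by
    have hJ := jb_pos x
    have a1 : (1 + ε * ‖x‖ ^ 2) ^ (-(δt - δq)) ≤ (ε * jb x) ^ (-(δt - δq)) :=
      Real.rpow_le_rpow_of_nonpos (by positivity) (by unfold jb; nlinarith) (by linarith)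
    calc W x ≤ jb x ^ (δt + 1) * (ε * jb x) ^ (-(δt - δq)) := by
          rw [hW, wt]; gcongr
      _ = ε ^ (-(δt - δq)) * (jb x ^ (δt + 1) * jb x ^ (-(δt - δq))) := by
          rw [Real.mul_rpow hε.le hJ.le]; ring
      _ = _ := by rw [← Real.rpow_add hJ]; ring_nf
  -- the vector field
  let P (i : Fin n) (x : Eu n) : ℝ := x i * jb x ^ (-1 : ℝ)
  have hcoord (i : Fin n) : ContDiff ℝ 1 fun x : Eu n => x i :=
    (EuclideanSpace.proj i : Eu n →L[ℝ] ℝ).contDiff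
  have hP (i) : ContDiff ℝ 1 (P i) := (hcoord i).mul ((jbp_contDiff _).of_le one_le_two)
  have hPv (i x) : P i x = x i * (1 / jb x) := by
    change x i * jb x ^ (-1 : ℝ) = _
    rw [Real.rpow_neg_one, one_div]
  have hPd (i x) : pd i (P i) x = 1 / jb x - 2 * x i ^ 2 * (1 / jb x) ^ 2 := by
    have hJ := jb_pos x
    have e : pd i (fun x : Eu n => x i) x = 1 := by
      change fderiv ℝ (EuclideanSpace.proj i : Eu n →L[ℝ] ℝ) x (EuclideanSpace.single i 1) = 1
      rw [ContinuousLinearMap.fderiv]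
      simp
    change pd i (fun x => x i * jb x ^ (-1 : ℝ)) x = _
    rw [pd_mul (hcoord i) ((jbp_contDiff _).of_le one_le_two), pd_jbp, e,
      Real.rpow_sub_one hJ.ne', Real.rpow_neg_one]
    field_simp
    ring
  have hPu (i) : ContDiff ℝ 1 fun x => P i x * u x := (hP i).mul hu1
  have hin (i) : ContDiff ℝ 1 fun x => pd i u x + c * (P i x * u x) :=
    (hg i).add (contDiff_const.mul (hPu i))
  let Y (i : Fin n) (x : Eu n) : ℝ := W x * (u x * (pd i u x + c * (P i x * u x)))
  have hY (i) : ContDiff ℝ 1 (Y i) := hWC.mul (hu1.mul (hin i))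
  have hYd (i x) : pd i (Y i) x = W x *
      (2 * ((δt + 1) * (1 / jb x) - (δt - δq) * (ε / (1 + ε * ‖x‖ ^ 2))) * x i *
        (u x * (pd i u x + c * (x i * (1 / jb x) * u x))) +
        (pd i u x * (pd i u x + c * (x i * (1 / jb x) * u x)) +
          u x * (pd i (pd i u) x + c * ((1 / jb x - 2 * x i ^ 2 * (1 / jb x) ^ 2) * u x +
            x i * (1 / jb x) * pd i u x)))) := by
    have e1 : pd i (fun x => pd i u x + c * (P i x * u x)) x =
        pd i (pd i u) x + c * (pd i (P i) x * u x + P i x * pd i u x) := by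
      rw [pd_add_const_mul (hg i) (hPu i), pd_mul (hP i) hu1]
    change pd i (fun x => W x * (u x * (pd i u x + c * (P i x * u x)))) x = _
    rw [pd_mul hWC (hu1.mul (hin i)), pd_mul hu1 (hin i), e1, hPd, hPv, hW, pd_wt _ _ hε.le]
    ring
  -- the boundary terms tend to zero
  have hB (i) : Tendsto (fun N => ∫ x, pd i (χ N) x * Y i x) atTop (𝓝 0) := by
    set K := ε ^ (-(δt - δq)) with hK
    have hK0 : 0 < K := Real.rpow_pos_of_pos hε _
    have := tendsto_integral_of_dominated_convergence (μ := (volume : Measure (Eu n)))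
      (F := fun N x => pd i (χ N) x * Y i x) (f := fun _ => 0)
      (fun x => K * (C + 2 * c ^ 2) * (u x ^ 2 * jb x ^ δq) +
        2 * K * (pd i u x ^ 2 * jb x ^ (δq + 1)))
      (fun N => ((pd_continuous ((hχ N).of_le one_le_two) i).mul
        (hY i).continuous).aestronglyMeasurable)
      ((h0.const_mul _).add ((h1 i).const_mul _))
      (fun N => Eventually.of_forall fun x => ?_) (Eventually.of_forall fun x => ?_)
    · simpa using this
    · have hJ := jb_pos x
      have hA := Real.rpow_nonneg hJ.le δq
      have a0 := hW2 x
      rw [rpow_succ] at a0 ⊢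
      set A := jb x ^ δq
      set p := pd i (χ N) x
      have a1 : p ^ 2 * jb x ≤ C := hχd N i x
      have a2 : P i x ^ 2 * jb x ≤ 1 := by
        rw [hPv, mul_pow, one_div, inv_pow, mul_assoc, sq (jb x), mul_inv, mul_assoc,
          inv_mul_cancel₀ hJ.ne', mul_one, ← div_eq_mul_inv, div_le_one hJ]
        exact coord_sq_le x i
      have a3 : ‖p * Y i x‖ ≤ K * (A * jb x) * (|p * u x| * |pd i u x + c * (P i x * u x)|) := by
        rw [Real.norm_eq_abs, show p * Y i x = W x * ((p * u x) * (pd i u x + c * (P i x * u x)))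
          by simp only [Y]; ring, abs_mul, abs_of_pos (hWp x), abs_mul]
        gcongr
      have a4 : |p * u x| * |pd i u x + c * (P i x * u x)| ≤
          p ^ 2 * u x ^ 2 + 2 * pd i u x ^ 2 + 2 * c ^ 2 * (P i x ^ 2 * u x ^ 2) := by
        have b1 := sq_abs (p * u x)
        have b2 := sq_abs (pd i u x + c * (P i x * u x))
        nlinarith [sq_nonneg (|p * u x| - |pd i u x + c * (P i x * u x)|),
          sq_nonneg (pd i u x - c * (P i x * u x)), sq_nonneg (p * u x)]
      refine a3.trans ((mul_le_mul_of_nonneg_left a4 (by positivity)).trans ?_)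
      have c1 := mul_le_mul_of_nonneg_right a1 (show 0 ≤ K * A * u x ^ 2 by positivity)
      have c2 := mul_le_mul_of_nonneg_right a2 (show 0 ≤ 2 * c ^ 2 * K * A * u x ^ 2 by positivity)
      linarith
    · refine tendsto_const_nhds.congr' ?_
      filter_upwards [hχe x] with N hN
      simp [pd, hN.fderiv_eq]
  have hBs : Tendsto (fun N => ∑ i, -∫ x, pd i (χ N) x * Y i x) atTop (𝓝 0) := by
    simpa using tendsto_finsetSum Finset.univ fun i _ => (hB i).neg
  filter_upwards [hBs.eventually (gt_mem_nhds one_pos)] with N hN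
  have hχ1' := (hχ N).of_le one_le_two
  have hDi (i) : Integrable fun x => χ N x * pd i (Y i) x :=
    integrable_compact (hχ1'.continuous.mul (pd_continuous (hY i) i)) (hχc N).mul_right
  have hDs : Integrable fun x => ∑ i, χ N x * pd i (Y i) x :=
    integrable_finsetSum _ fun i _ => hDi i
  have hDv : ∫ x, ∑ i, χ N x * pd i (Y i) x ≤ 1 := by
    rw [integral_finsetSum _ fun i _ => hDi i]
    refine le_trans (le_of_eq ?_) hN.le
    refine Finset.sum_congr rfl fun i _ => ?_
    rw [integral_pd_mul hχ1' (hY i) (hχc N), neg_neg]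
  have hJc : Continuous fun x : Eu n => 1 / jb x :=
    continuous_const.div jb_contDiff.continuous fun x => (jb_pos x).ne'
  have hFi : Integrable fun x => χ N x * (W x * (u x ^ 2 * (1 / jb x))) :=
    integrable_compact (hχ1'.continuous.mul (hWC.continuous.mul ((hu.continuous.pow 2).mul hJc)))
      (hχc N).mul_right
  have main : ∫ x, γ / 2 * (χ N x * (W x * (u x ^ 2 * (1 / jb x)))) ≤
      ∫ x, (1 / (2 * γ) * (lap n u x ^ 2 * jb x ^ (δt + 2)) + ∑ i, χ N x * pd i (Y i) x) := by
    refine integral_mono (hFi.const_mul _) ((hL.const_mul _).add hDs) fun x => ?_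
    have hJ := jb_pos x
    have b0 : (0:ℝ) ≤ ε / (1 + ε * ‖x‖ ^ 2) := by positivity
    have b1 : ε / (1 + ε * ‖x‖ ^ 2) ≤ 1 / jb x := by
      rw [div_le_div_iff₀ (by positivity) hJ]
      unfold jb
      nlinarith
    have sl := slope_bound hJ b0 b1 hq ht
    rw [show δt + 1 - (δq + 1) = δt - δq by ring] at sl
    have hp := hardy_pointwise (u := u x) (g := fun i => pd i u x) hJ hc hc0
      (sum_sq_coord x) sl (lap_eq hu x)
    rw [← hγ] at hp
    have hχW : 0 ≤ χ N x * W x := mul_nonneg (hχ0 N x) (hWp x).le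
    have h2 : χ N x * W x * (u x * lap n u x + γ * (u x ^ 2 / jb x)) ≤
        ∑ i, χ N x * pd i (Y i) x := by
      refine (mul_le_mul_of_nonneg_left hp hχW).trans (le_of_eq ?_)
      rw [Finset.mul_sum]
      exact Finset.sum_congr rfl fun i _ => by rw [hYd i x, mul_assoc]
    -- absorb `u Δu`
    have h3 : -(u x * lap n u x) ≤ γ / 2 * (u x ^ 2 / jb x) +
        1 / (2 * γ) * (lap n u x ^ 2 * jb x) := by
      have : γ / 2 * (u x ^ 2 / jb x) + 1 / (2 * γ) * (lap n u x ^ 2 * jb x) + u x * lap n u x =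
          (γ * u x + lap n u x * jb x) ^ 2 / (2 * γ * jb x) := by
        field_simp
        ring
      have : 0 ≤ (γ * u x + lap n u x * jb x) ^ 2 / (2 * γ * jb x) := by positivity
      linarith
    have h4 := mul_le_mul_of_nonneg_left h3 hχW
    have h5 : χ N x * W x * (1 / (2 * γ) * (lap n u x ^ 2 * jb x)) ≤
        1 / (2 * γ) * (lap n u x ^ 2 * jb x ^ (δt + 2)) := by
      have e2 : jb x ^ (δt + 2) = jb x ^ (δt + 1) * jb x := by
        rw [← rpow_succ]; ring_nf
      have : χ N x * W x ≤ 1 * jb x ^ (δt + 1) :=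
        mul_le_mul (hχ1 N x) (hW1 x) (hWp x).le zero_le_one
      have h6 := mul_le_mul_of_nonneg_right this
        (show 0 ≤ 1 / (2 * γ) * (lap n u x ^ 2 * jb x) by positivity)
      rw [e2]
      linarith
    have e3 : χ N x * (W x * (u x ^ 2 * (1 / jb x))) = χ N x * W x * (u x ^ 2 / jb x) := by ring
    dsimp only
    rw [e3]
    linarith
  rw [integral_const_mul, integral_add (hL.const_mul _) hDs, integral_const_mul] at main
  rw [div_mul_eq_mul_div, le_div_iff₀ hγ0]
  linarith

/-- Decay improvement at the level of `u` itself. -/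
lemma decay_estimate (hn : 3 ≤ n) {δq δt : ℝ} (hδq : -(n : ℝ) / 2 < δq) (hle : δq ≤ δt)
    (hδt : δt < (n : ℝ) / 2 - 2) {u : Eu n → ℝ} (hu : ContDiff ℝ 2 u)
    (h0 : Integrable fun x => u x ^ 2 * jb x ^ δq)
    (h1 : ∀ i, Integrable fun x => pd i u x ^ 2 * jb x ^ (δq + 1))
    (hL : Integrable fun x => lap n u x ^ 2 * jb x ^ (δt + 2)) :
    Integrable fun x => u x ^ 2 * jb x ^ δt := by
  obtain ⟨χ, C, -, hχ, hχc, hχ0, hχ1, hχe, hχd⟩ := exists_cutoff (n := n)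
  have hn' : (3 : ℝ) ≤ n := by exact_mod_cast hn
  obtain ⟨c, hc⟩ : ∃ c : ℝ, c = ((n : ℝ) - 2) / 2 := ⟨_, rfl⟩
  set κ := max |δq + 1| |δt + 1|
  have hκ0 : 0 ≤ κ := (abs_nonneg _).trans (le_max_left _ _)
  have hκ : κ < c := max_lt (abs_lt.2 ⟨by linarith, by linarith⟩)
    (abs_lt.2 ⟨by linarith, by linarith⟩)
  have hstep (k : ℕ) := (decay_step hχ hχc hχ0 hχ1 hχe hχd (c := c) (by linarith)
    (by linarith) (pow_lt_pow_left₀ hκ hκ0 two_ne_zero) (le_max_left _ _) (le_max_right _ _)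
    hle hu h0 h1 hL (ε := 1 / ((k : ℝ) + 1)) (by positivity)
    (by rw [div_le_one (by positivity)]; linarith [Nat.cast_nonneg (α := ℝ) k])).and
    (eventually_ge_atTop k)
  choose N hN using fun k => (hstep k).exists
  have hJc : Continuous fun x : Eu n => 1 / jb x :=
    continuous_const.div jb_contDiff.continuous fun x => (jb_pos x).ne'
  refine integrable_of_bounded ((hu.continuous.pow 2).mul (jbp_continuous _))
    (fun k x => χ (N k) x * (wt δt (δt - δq) (1 / ((k : ℝ) + 1)) x * (u x ^ 2 * (1 / jb x))))
    (fun k => ?_) (fun k x => ?_) (fun x => ?_) _ (fun k => (hN k).1)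
  · exact integrable_compact ((hχ _).continuous.mul
      ((wt_contDiff _ _ (by positivity)).continuous.mul ((hu.continuous.pow 2).mul hJc)))
      (hχc _).mul_right
  · have := (wt_pos δt (δt - δq) (show 0 ≤ 1 / ((k : ℝ) + 1) by positivity) x).le
    have hJ := jb_pos x
    have := hχ0 (N k) x
    positivity
  · have hJ := jb_pos x
    have l1 : Tendsto (fun k => χ (N k) x) atTop (𝓝 1) := by
      refine tendsto_const_nhds.congr' ?_
      filter_upwards [(tendsto_atTop_mono (fun k => (hN k).2) tendsto_id).eventually (hχe x)]
        with k hk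
      exact hk.eq_of_nhds.symm
    have l2 : Tendsto (fun k : ℕ => (1 + 1 / ((k : ℝ) + 1) * ‖x‖ ^ 2) ^ (-(δt - δq))) atTop
        (𝓝 1) := by
      have : Tendsto (fun k : ℕ => 1 + 1 / ((k : ℝ) + 1) * ‖x‖ ^ 2) atTop (𝓝 1) := by
        simpa using (tendsto_one_div_add_atTop_nhds_zero_nat.mul_const (‖x‖ ^ 2)).const_add 1
      simpa using this.rpow_const (p := -(δt - δq)) (Or.inl one_ne_zero)
    have := l1.mul (((tendsto_const_nhds (x := jb x ^ (δt + 1))).mul l2).mul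
      (tendsto_const_nhds (x := u x ^ 2 * (1 / jb x))))
    have e : u x ^ 2 * jb x ^ δt = 1 * (jb x ^ (δt + 1) * 1 * (u x ^ 2 * (1 / jb x))) := by
      rw [rpow_succ]
      field_simp
    rw [e]
    exact this

/-! ### Higher derivatives -/

lemma norm_iteratedFDeriv_pd_le {f : Eu n → ℝ} {m : ℕ} (hf : ContDiff ℝ (m + 1) f) (i : Fin n)
    (x : Eu n) : ‖iteratedFDeriv ℝ m (pd i f) x‖ ≤ ‖iteratedFDeriv ℝ (m + 1) f x‖ := by
  have := norm_iteratedFDeriv_clm_apply_const (n := m) (N := (m : WithTop ℕ∞)) (x := x)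
    (c := (EuclideanSpace.single i 1 : Eu n)) (hf.fderiv_right (m := m) le_rfl).contDiffAt le_rfl
  rw [norm_iteratedFDeriv_fderiv, show ‖(EuclideanSpace.single i 1 : Eu n)‖ = 1 by simp, one_mul] at this
  exact this

lemma fderiv_eq_sum (f : Eu n → ℝ) (x : Eu n) :
    fderiv ℝ f x = ∑ i, (pd i f x) • (EuclideanSpace.proj i : Eu n →L[ℝ] ℝ) := by
  refine ContinuousLinearMap.ext fun y => ?_
  conv_lhs => rw [← (EuclideanSpace.basisFun (Fin n) ℝ).sum_repr y]
  simp [pd, mul_comm]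

lemma norm_proj_le (i : Fin n) : ‖(EuclideanSpace.proj i : Eu n →L[ℝ] ℝ)‖ ≤ 1 :=
  ContinuousLinearMap.opNorm_le_bound _ zero_le_one fun y => by
    simpa using PiLp.norm_apply_le y i

lemma norm_iteratedFDeriv_succ_le {f : Eu n → ℝ} {m : ℕ} (hf : ContDiff ℝ (m + 1) f)
    (x : Eu n) : ‖iteratedFDeriv ℝ (m + 1) f x‖ ≤ ∑ i, ‖iteratedFDeriv ℝ m (pd i f) x‖ := by
  have hp (i : Fin n) : ContDiff ℝ m (pd i f) := pd_contDiff hf le_rfl i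
  rw [← norm_iteratedFDeriv_fderiv, funext (fderiv_eq_sum f), iteratedFDeriv_sum
    (f := fun j x => pd j f x • (EuclideanSpace.proj j : Eu n →L[ℝ] ℝ))
    fun j _ => (hp j).smul contDiff_const, Finset.sum_apply]
  refine (norm_sum_le _ _).trans (Finset.sum_le_sum fun i _ => ?_)
  set L : ℝ →L[ℝ] (Eu n →L[ℝ] ℝ) :=
    ContinuousLinearMap.toSpanSingleton ℝ (EuclideanSpace.proj i : Eu n →L[ℝ] ℝ)
  have h := L.norm_iteratedFDeriv_comp_left (hp i).contDiffAt (le_refl (m : WithTop ℕ∞)) (x := x)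
  have hL : ‖L‖ ≤ 1 := by
    rw [ContinuousLinearMap.norm_toSpanSingleton]; exact norm_proj_le i
  exact h.trans (mul_le_of_le_one_left (norm_nonneg _) hL)

lemma continuous_weighted {f : Eu n → ℝ} {m : ℕ} (hf : ContDiff ℝ m f) (b : ℝ) :
    Continuous fun x => ‖iteratedFDeriv ℝ m f x‖ ^ 2 * jb x ^ b :=
  ((hf.continuous_iteratedFDeriv le_rfl).norm.pow 2).mul (jbp_continuous b)

/-- Weighted square integrability of `Dᵐ(∂ᵢf)` for all `i` gives that of `Dᵐ⁺¹f`. -/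
lemma integrable_succ {f : Eu n → ℝ} {m : ℕ} (hf : ContDiff ℝ (m + 1) f) (b : ℝ)
    (h : ∀ i, Integrable fun x => ‖iteratedFDeriv ℝ m (pd i f) x‖ ^ 2 * jb x ^ b) :
    Integrable fun x => ‖iteratedFDeriv ℝ (m + 1) f x‖ ^ 2 * jb x ^ b := by
  refine ((integrable_finsetSum Finset.univ fun i _ => h i).const_mul (n : ℝ)).mono'
    (continuous_weighted (m := m + 1) (by exact_mod_cast hf) b).aestronglyMeasurable
    (Eventually.of_forall fun x => ?_)
  have hJ := Real.rpow_nonneg (jb_pos x).le b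
  rw [Real.norm_of_nonneg (by positivity), ← Finset.sum_mul, ← mul_assoc]
  gcongr
  calc ‖iteratedFDeriv ℝ (m + 1) f x‖ ^ 2
      ≤ (∑ i, ‖iteratedFDeriv ℝ m (pd i f) x‖) ^ 2 := by
        gcongr; exact norm_iteratedFDeriv_succ_le hf x
    _ ≤ n * ∑ i, ‖iteratedFDeriv ℝ m (pd i f) x‖ ^ 2 := by
        simpa using sq_sum_le_card_mul_sum_sq (s := (Finset.univ : Finset (Fin n)))
          (f := fun i => ‖iteratedFDeriv ℝ m (pd i f) x‖)

/-- Weighted estimates for all derivatives of order at least two, by differentiating the equation. -/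
lemma higher_estimate (k : ℕ) : ∀ (a : ℝ) (u : Eu n → ℝ), ContDiff ℝ (k + 2 : ℕ) u →
    (∀ i, Integrable fun x => pd i u x ^ 2 * jb x ^ (a + 1)) →
    (∀ j ≤ k, Integrable fun x => ‖iteratedFDeriv ℝ j (lap n u) x‖ ^ 2 * jb x ^ (j + (a + 2))) →
    ∀ j ≤ k, Integrable fun x =>
      ‖iteratedFDeriv ℝ (j + 2) u x‖ ^ 2 * jb x ^ ((j + 2 : ℕ) + a) := by
  induction k with
  | zero =>
    intro a u hu h1 hL j hj
    obtain rfl : j = 0 := by omega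
    have hu2 : ContDiff ℝ 2 u := by simpa using hu
    have hL0 : Integrable fun x => lap n u x ^ 2 * jb x ^ (a + 2) := by
      simpa using hL 0 le_rfl
    refine integrable_succ (m := 1) (by norm_num; exact hu2) _ fun i => ?_
    refine integrable_succ (m := 0) (by norm_num; exact pd_contDiff hu2 (by norm_num) i) _
      fun i' => ?_
    have := hessian_estimate hu2 a h1 hL0 i' i
    simpa [add_comm] using this
  | succ k ih =>
    intro a u hu h1 hL j hj
    have hu2 : ContDiff ℝ 2 u := hu.of_le (by exact_mod_cast (by omega : 2 ≤ k + 1 + 2))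
    have hu3 : ContDiff ℝ 3 u := hu.of_le (by exact_mod_cast (by omega : 3 ≤ k + 1 + 2))
    have hL0 : Integrable fun x => lap n u x ^ 2 * jb x ^ (a + 2) := by
      simpa using hL 0 (by omega)
    have hlap : ContDiff ℝ (k + 1 : ℕ) (lap n u) :=
      lap_contDiff hu (by exact_mod_cast (by omega : k + 1 + 1 + 1 ≤ k + 1 + 2))
    have hpd (i : Fin n) := ih (a + 1) (pd i u)
      (pd_contDiff hu (by exact_mod_cast (by omega : k + 2 + 1 ≤ k + 1 + 2)) i)
      (fun i' => by
        have := hessian_estimate hu2 a h1 hL0 i' i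
        rwa [show a + 2 = a + 1 + 1 by ring] at this)
      (fun l hl => by
        have hl1 : ContDiff ℝ (l + 1) (lap n u) :=
          hlap.of_le (by exact_mod_cast (by omega : l + 1 ≤ k + 1))
        rw [show lap n (pd i u) = pd i (lap n u) from funext (lap_pd hu3 i)]
        refine (hL (l + 1) (by omega)).mono'
          (continuous_weighted (pd_contDiff hl1 le_rfl i) _).aestronglyMeasurable
          (Eventually.of_forall fun x => ?_)
        have hJ := Real.rpow_nonneg (jb_pos x).le (l + (a + 1 + 2))
        rw [Real.norm_of_nonneg (by positivity),
          show ((l + 1 : ℕ) : ℝ) + (a + 2) = l + (a + 1 + 2) by push_cast; ring]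
        gcongr
        exact norm_iteratedFDeriv_pd_le hl1 i x)
    rcases Nat.eq_zero_or_pos j with rfl | hj0
    · refine integrable_succ (m := 1) (by norm_num; exact hu2) _ fun i => ?_
      refine integrable_succ (m := 0) (by norm_num; exact pd_contDiff hu2 (by norm_num) i) _
        fun i' => ?_
      have := hessian_estimate hu2 a h1 hL0 i' i
      simpa [add_comm] using this
    · obtain ⟨l, rfl⟩ : ∃ l, j = l + 1 := ⟨j - 1, by omega⟩
      refine integrable_succ (m := l + 2)
        (hu.of_le (by exact_mod_cast (by omega : l + 2 + 1 ≤ k + 1 + 2))) _ fun i => ?_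
      have := hpd i l (by omega)
      rwa [show ((l + 2 : ℕ) : ℝ) + (a + 1) = ((l + 1 + 2 : ℕ) : ℝ) + a by push_cast; ring] at this

end WeightedLaplace

/-- Weighted decay improvement for the Euclidean Laplacian: if `n ≥ 3`, `s ≥ 2`,
`s > n/2`, `δ_q > -n/2` and `δ_q ≤ δ̃ < n/2 - 2`, and if `u` is `C^s` with finite
`H_{s,δ_q}`-norm while `Δu` has finite `H_{s-2,δ̃+2}`-norm, then `u` has finite
`H_{s,δ̃}`-norm. -/
theorem weighted_decay_improvement (n : ℕ) (hn : 3 ≤ n) (s : ℕ) (hs2 : 2 ≤ s)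
    (hs : (n : ℝ) / 2 < s) (δq δt : ℝ)
    (hδq : -(n : ℝ) / 2 < δq) (hle : δq ≤ δt) (hδt : δt < (n : ℝ) / 2 - 2)
    (u : EuclideanSpace ℝ (Fin n) → ℝ) (hu : ContDiff ℝ s u)
    (huH : FiniteHNorm n s δq u)
    (hΔ : FiniteHNorm n (s - 2) (δt + 2) (fun x => lap n u x)) :
    FiniteHNorm n s δt u := by
  have hu2 : ContDiff ℝ 2 u := hu.of_le (by exact_mod_cast hs2)
  have h0 : Integrable fun x => u x ^ 2 * WeightedLaplace.jb x ^ δq := by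
    simpa [WeightedLaplace.jb] using huH 0 (by omega)
  have h1 (i : Fin n) :
      Integrable fun x => WeightedLaplace.pd i u x ^ 2 * WeightedLaplace.jb x ^ (δq + 1) := by
    have hc := WeightedLaplace.pd_continuous (hu2.of_le one_le_two) i
    refine (huH 1 (by omega)).mono'
      ((hc.pow 2).mul (WeightedLaplace.jbp_continuous _)).aestronglyMeasurable
      (Filter.Eventually.of_forall fun x => ?_)
    have hJ := Real.rpow_nonneg (WeightedLaplace.jb_pos x).le (δq + 1)
    rw [Real.norm_of_nonneg (by positivity), Nat.cast_one, add_comm 1 δq]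
    have hle := WeightedLaplace.norm_iteratedFDeriv_pd_le (m := 0) (f := u) (by
      simpa using hu2.of_le one_le_two) i x
    rw [norm_iteratedFDeriv_zero, Real.norm_eq_abs] at hle
    refine mul_le_mul_of_nonneg_right ?_ hJ
    rw [← sq_abs]
    exact pow_le_pow_left₀ (abs_nonneg _) hle 2
  have hL : Integrable fun x => lap n u x ^ 2 * WeightedLaplace.jb x ^ (δt + 2) := by
    simpa [WeightedLaplace.jb] using hΔ 0 (by omega)
  have d0 := WeightedLaplace.decay_estimate hn hδq hle hδt hu2 h0 h1 hL
  have d1 := WeightedLaplace.gradient_estimate hu2 δt d0 hL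
  obtain ⟨k, rfl⟩ : ∃ k, s = k + 2 := ⟨s - 2, by omega⟩
  have d2 := WeightedLaplace.higher_estimate k δt u hu d1 (fun j hj => hΔ j (by omega))
  intro m hm
  match m, hm with
  | 0, _ => simpa [WeightedLaplace.jb] using d0
  | 1, _ =>
    have := WeightedLaplace.integrable_succ (m := 0) (f := u) (by
      simpa using hu2.of_le one_le_two) (δt + 1) (fun i => by simpa using d1 i)
    rw [Nat.cast_one, add_comm 1 δt]
    exact this
  | j + 2, hm => exact d2 j (by omega)
end

section
/- Weighted Liouville theorem: let n ≥ 1 and let u : ℝ^n → ℝ be a C² function that is harmonic on all of ℝ^n (Δu = 0 everywhere). If there exists a real number δ > −n/2 such that ∫_{ℝ^n} u(x)² (1+‖x‖²)^δ dx < ∞, then u ≡ 0. -/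
/-!
The proof rests on a weighted mean value property. Take the compactly supported radial bump
`ψ(y) = max(0, 1 - ‖y‖²)`. It satisfies `-2 y ψ(y) = ∇Ψ(y)` for a compactly supported `C¹`
function `Ψ` (`bumpPot`), so for `F(r) = ∫ u(x₀ + r y) ψ(y) dy` an integration by parts gives
`F'(r) = ∫ ∇u(x₀ + r y) · y ψ(y) dy = (r/2) ∫ Δu(x₀ + r y) Ψ(y) dy = 0`.
Hence `F(r) = F(0) = u(x₀) ∫ ψ` for every `r` (`mean_value`).

Expanding `0 ≤ ∫ (u(x₀ + r y) - u(x₀))² ψ(y) dy` turns this into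
`u(x₀)² ∫ ψ ≤ ∫ u(x₀ + r y)² ψ(y) dy` (`sq_mean_value`). With `d = min δ 0`, the weight is at least
a constant multiple of `r ^ (2d)` on the ball of radius `r ≥ 1` about `x₀`, so after rescaling the
right-hand side is at most a constant times `r ^ (-(n + 2d))`. Since `d > -n/2`, this tends to `0`
as `r → ∞`, and `u(x₀) = 0` because `∫ ψ > 0`.
-/

open MeasureTheory

open Filter Topology

local notation "𝔼" n => EuclideanSpace ℝ (Fin n)

/-! ### The radial bump and its potential -/

/-- The radial weight `ψ(y) = max(0, 1 - ‖y‖²)`, supported in the closed unit ball. -/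
noncomputable def bump {n : ℕ} (y : 𝔼 n) : ℝ := max 0 (1 - ‖y‖ ^ 2)

/-- The `C¹` primitive `t ↦ ∫₀ᵗ max(0, s) ds` of the positive part. -/
noncomputable def posPrim (t : ℝ) : ℝ := ∫ s in (0 : ℝ)..t, max 0 s

/-- The radial potential `Ψ`, whose gradient is `-2 y ψ(y)`. -/
noncomputable def bumpPot {n : ℕ} (y : 𝔼 n) : ℝ := posPrim (1 - ‖y‖ ^ 2)

lemma hasDerivAt_posPrim (t : ℝ) : HasDerivAt posPrim (max 0 t) t := by
  have hc : Continuous fun s : ℝ => max 0 s := by fun_prop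
  exact hc.integral_hasStrictDerivAt 0 t |>.hasDerivAt

lemma posPrim_of_nonpos {t : ℝ} (ht : t ≤ 0) : posPrim t = 0 := by
  unfold posPrim
  rw [intervalIntegral.integral_congr (g := fun _ => (0 : ℝ))]
  · simp
  · intro s hs
    rw [Set.uIcc_of_ge ht] at hs
    exact max_eq_left hs.2

lemma continuous_bump {n : ℕ} : Continuous (bump : (𝔼 n) → ℝ) := by
  unfold bump; fun_prop

lemma bump_nonneg {n : ℕ} (y : 𝔼 n) : 0 ≤ bump y := le_max_left _ _

lemma bump_le_one {n : ℕ} (y : 𝔼 n) : bump y ≤ 1 :=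
  max_le zero_le_one (by nlinarith [sq_nonneg ‖y‖])

lemma bump_eq_zero {n : ℕ} {y : 𝔼 n} (hy : 1 < ‖y‖) : bump y = 0 :=
  max_eq_left (by nlinarith)

lemma bumpPot_eq_zero {n : ℕ} {y : 𝔼 n} (hy : 1 < ‖y‖) : bumpPot y = 0 :=
  posPrim_of_nonpos (by nlinarith)

lemma hasCompactSupport_of_unit {n : ℕ} {f : (𝔼 n) → ℝ} (hf : ∀ y, 1 < ‖y‖ → f y = 0) :
    HasCompactSupport f := by
  refine HasCompactSupport.intro (isCompact_closedBall (0 : 𝔼 n) 1) fun y hy => hf y ?_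
  simpa using hy

lemma integrable_of_unit {n : ℕ} {f : (𝔼 n) → ℝ} (hc : Continuous f)
    (hf : ∀ y, 1 < ‖y‖ → f y = 0) : Integrable f :=
  hc.integrable_of_hasCompactSupport (hasCompactSupport_of_unit hf)

lemma integral_bump_pos {n : ℕ} : 0 < ∫ y : 𝔼 n, bump y := by
  refine continuous_bump.integral_pos_of_hasCompactSupport_nonneg_nonzero
    (hasCompactSupport_of_unit fun y => bump_eq_zero) bump_nonneg (x := 0) ?_
  simp [bump]

lemma hasFDerivAt_bumpPot {n : ℕ} (y : 𝔼 n) :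
    HasFDerivAt bumpPot ((-2 * bump y) • innerSL ℝ y) y := by
  have h1 : HasFDerivAt (fun y : 𝔼 n => 1 - ‖y‖ ^ 2) (-(2 • innerSL ℝ y)) y :=
    (hasStrictFDerivAt_norm_sq y).hasFDerivAt.const_sub 1
  have h2 := (hasDerivAt_posPrim (1 - ‖y‖ ^ 2)).comp_hasFDerivAt y h1
  refine h2.congr_fderiv ?_
  ext v
  simp [bump]
  ring

lemma fderiv_bumpPot {n : ℕ} (y : 𝔼 n) (i : Fin n) :
    fderiv ℝ bumpPot y (EuclideanSpace.single i 1) = -2 * bump y * y i := by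
  rw [(hasFDerivAt_bumpPot y).fderiv]
  simp [EuclideanSpace.inner_single_right]

lemma continuous_bumpPot {n : ℕ} : Continuous (bumpPot : (𝔼 n) → ℝ) :=
  continuous_iff_continuousAt.2 fun y => (hasFDerivAt_bumpPot y).continuousAt

/-! ### The weighted mean value property -/

/-- The radial derivative of a harmonic function has vanishing `ψ`-average: one integration by
parts in each coordinate moves the derivative from `Ψ` onto `∇u`, producing `Δu`. -/
lemma integral_radial_deriv_eq_zero {n : ℕ} {u : (𝔼 n) → ℝ} (hu : ContDiff ℝ 2 u)
    (hharm : ∀ x, lap n u x = 0) (x₀ : 𝔼 n) (r : ℝ) :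
    ∫ y, fderiv ℝ u (x₀ + r • y) y * bump y = 0 := by
  have hDu : ContDiff ℝ 1 (fderiv ℝ u) := hu.fderiv_right (by norm_num)
  have hDc : Continuous (fderiv ℝ u) := hDu.continuous
  have hDDc : Continuous (fderiv ℝ (fderiv ℝ u)) := hDu.continuous_fderiv (by norm_num)
  let e : Fin n → 𝔼 n := fun i => EuclideanSpace.single i 1
  let v : Fin n → (𝔼 n) → ℝ := fun i y => fderiv ℝ u (x₀ + r • y) (e i)
  have hv : ∀ i y, HasFDerivAt (v i)
      (r • (fderiv ℝ (fderiv ℝ u) (x₀ + r • y)).flip (e i)) y := by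
    intro i y
    have h1 : HasFDerivAt (fun y : 𝔼 n => x₀ + r • y) (r • ContinuousLinearMap.id ℝ (𝔼 n)) y :=
      ((hasFDerivAt_id y).const_smul r).const_add x₀
    have h2 := (hDu.differentiable (by norm_num) (x₀ + r • y)).hasFDerivAt.comp y h1
    refine (h2.clm_apply (hasFDerivAt_const (e i) y)).congr_fderiv ?_
    ext w
    simp
  have hvc : ∀ i, Continuous (v i) := fun i =>
    continuous_iff_continuousAt.2 fun y => (hv i y).continuousAt
  have hv' : ∀ i y, fderiv ℝ (v i) y (e i) =
      r * fderiv ℝ (fderiv ℝ u) (x₀ + r • y) (e i) (e i) := by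
    intro i y
    rw [(hv i y).fderiv]
    simp
  have hv'c : ∀ i, Continuous fun y => fderiv ℝ (v i) y (e i) := by
    intro i
    simp_rw [hv']
    fun_prop
  have hint1 : ∀ i, Integrable fun y : 𝔼 n => bumpPot y * fderiv ℝ (v i) y (e i) := fun i =>
    integrable_of_unit (continuous_bumpPot.mul (hv'c i)) fun y hy => by
      simp [bumpPot_eq_zero hy]
  have hint2 : ∀ i, Integrable fun y : 𝔼 n => fderiv ℝ bumpPot y (e i) * v i y := fun i => by
    simp_rw [e, fderiv_bumpPot]
    refine integrable_of_unit ?_ fun y hy => by simp [bump_eq_zero hy]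
    have := continuous_bump (n := n)
    have := hvc i
    fun_prop
  have hparts : ∀ i, ∫ y, bumpPot y * fderiv ℝ (v i) y (e i) =
      -∫ y, fderiv ℝ bumpPot y (e i) * v i y := fun i =>
    integral_mul_fderiv_eq_neg_fderiv_mul_of_integrable (hint2 i) (hint1 i)
      (integrable_of_unit (continuous_bumpPot.mul (hvc i)) fun y hy => by
        simp [bumpPot_eq_zero hy])
      (fun y _ => (hasFDerivAt_bumpPot y).differentiableAt)
      (fun y _ => (hv i y).differentiableAt)
  have hlap : ∀ y : 𝔼 n, ∑ i, bumpPot y * fderiv ℝ (v i) y (e i) = 0 := by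
    intro y
    have h := hharm (x₀ + r • y)
    simp only [lap, iteratedFDeriv_two_apply] at h
    simp_rw [hv', ← Finset.mul_sum]
    rw [h]
    simp
  have hrad : ∀ y : 𝔼 n, ∑ i, fderiv ℝ bumpPot y (e i) * v i y =
      -2 * (fderiv ℝ u (x₀ + r • y) y * bump y) := by
    intro y
    have hy : y = ∑ i, y i • e i := by
      conv_lhs => rw [← (EuclideanSpace.basisFun (Fin n) ℝ).sum_repr y]
      simp [e]
    have h2 : fderiv ℝ u (x₀ + r • y) y = ∑ i, y i * v i y := by
      conv_lhs => rw [show fderiv ℝ u (x₀ + r • y) y =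
        fderiv ℝ u (x₀ + r • y) (∑ i, y i • e i) from congrArg _ hy]
      simp [v]
    rw [h2, Finset.sum_mul, Finset.mul_sum]
    refine Finset.sum_congr rfl fun i _ => ?_
    simp only [e, fderiv_bumpPot]
    ring
  have hsum := Finset.sum_congr (rfl : (Finset.univ : Finset (Fin n)) = _) fun i _ => hparts i
  rw [← integral_finsetSum _ fun i _ => hint1 i, Finset.sum_neg_distrib,
    ← integral_finsetSum _ fun i _ => hint2 i] at hsum
  simp_rw [hlap, hrad, integral_const_mul] at hsum
  simp at hsum
  exact hsum

/-- Weighted mean value property of harmonic functions, at every scale `r`. -/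
lemma mean_value {n : ℕ} {u : (𝔼 n) → ℝ} (hu : ContDiff ℝ 2 u)
    (hharm : ∀ x, lap n u x = 0) (x₀ : 𝔼 n) (r : ℝ) :
    ∫ y, u (x₀ + r • y) * bump y = u x₀ * ∫ y : 𝔼 n, bump y := by
  have hDc : Continuous (fderiv ℝ u) := hu.continuous_fderiv (by norm_num)
  have huc : Continuous u := hu.continuous
  have hbc := continuous_bump (n := n)
  have hder : ∀ s : ℝ, HasDerivAt (fun r : ℝ => ∫ y, u (x₀ + r • y) * bump y) 0 s := by
    intro s
    rw [← integral_radial_deriv_eq_zero hu hharm x₀ s]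
    obtain ⟨C, hC⟩ := (isCompact_closedBall x₀ (|s| + 1)).exists_bound_of_continuousOn
      hDc.continuousOn
    refine (hasDerivAt_integral_of_dominated_loc_of_deriv_le (bound := fun y => C * bump y)
      (F' := fun r y => fderiv ℝ u (x₀ + r • y) y * bump y)
      (Metric.ball_mem_nhds s one_pos) ?_ ?_ ?_ ?_ ?_ ?_).2
    · exact .of_forall fun r => Continuous.aestronglyMeasurable (by fun_prop)
    · exact integrable_of_unit (by fun_prop) fun y hy => by simp [bump_eq_zero hy]
    · exact Continuous.aestronglyMeasurable (by fun_prop)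
    · refine .of_forall fun y t ht => ?_
      rcases lt_or_ge 1 ‖y‖ with hy | hy
      · simp [bump_eq_zero hy]
      rw [norm_mul, Real.norm_of_nonneg (bump_nonneg y)]
      refine mul_le_mul_of_nonneg_right ?_ (bump_nonneg y)
      have ht' : |t| ≤ |s| + 1 := by
        have h1 : |t - s| < 1 := by simpa [Real.dist_eq] using ht
        have h2 := abs_sub_abs_le_abs_sub t s
        linarith
      have hmem : x₀ + t • y ∈ Metric.closedBall x₀ (|s| + 1) := by
        simp only [Metric.mem_closedBall, dist_self_add_left, norm_smul, Real.norm_eq_abs]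
        nlinarith [abs_nonneg t, norm_nonneg y]
      have hb := hC _ hmem
      calc ‖fderiv ℝ u (x₀ + t • y) y‖ ≤ ‖fderiv ℝ u (x₀ + t • y)‖ * ‖y‖ :=
            ContinuousLinearMap.le_opNorm _ _
        _ ≤ ‖fderiv ℝ u (x₀ + t • y)‖ * 1 := by gcongr
        _ ≤ C := by linarith
    · exact (integrable_of_unit hbc fun y => bump_eq_zero).const_mul C
    · refine .of_forall fun y t _ => ?_
      have h1 : HasDerivAt (fun t : ℝ => x₀ + t • y) y t := by
        simpa using ((hasDerivAt_id t).smul_const y).const_add x₀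
      exact (((hu.differentiable (by norm_num) _).hasFDerivAt.comp_hasDerivAt t h1)).mul_const _
  have h := is_const_of_deriv_eq_zero (fun s => (hder s).differentiableAt)
    (fun s => (hder s).deriv) r 0
  simp only [zero_smul, add_zero, integral_const_mul] at h
  exact h

/-- Jensen's inequality for the mean value property and the square function. -/
lemma sq_mean_value {n : ℕ} {u : (𝔼 n) → ℝ} (hu : ContDiff ℝ 2 u)
    (hharm : ∀ x, lap n u x = 0) (x₀ : 𝔼 n) (r : ℝ) :
    u x₀ ^ 2 * ∫ y : 𝔼 n, bump y ≤ ∫ y, u (x₀ + r • y) ^ 2 * bump y := by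
  have huc : Continuous u := hu.continuous
  have hbc := continuous_bump (n := n)
  have i1 : Integrable fun y => u (x₀ + r • y) ^ 2 * bump y :=
    integrable_of_unit (by fun_prop) fun y hy => by simp [bump_eq_zero hy]
  have i2 : Integrable fun y => u (x₀ + r • y) * bump y :=
    integrable_of_unit (by fun_prop) fun y hy => by simp [bump_eq_zero hy]
  have i3 : Integrable (bump : (𝔼 n) → ℝ) := integrable_of_unit hbc fun y => bump_eq_zero
  have i12 : Integrable fun y => u (x₀ + r • y) ^ 2 * bump y
      - 2 * u x₀ * (u (x₀ + r • y) * bump y) := i1.sub (i2.const_mul _)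
  have h0 : 0 ≤ ∫ y, (u (x₀ + r • y) - u x₀) ^ 2 * bump y :=
    integral_nonneg fun y => mul_nonneg (sq_nonneg _) (bump_nonneg y)
  have h1 : ∫ y, (u (x₀ + r • y) - u x₀) ^ 2 * bump y =
      (∫ y, u (x₀ + r • y) ^ 2 * bump y) - (2 * u x₀) * (∫ y, u (x₀ + r • y) * bump y)
        + u x₀ ^ 2 * ∫ y : 𝔼 n, bump y := by
    rw [← integral_const_mul, ← integral_const_mul, ← integral_sub i1 (i2.const_mul _),
      ← integral_add i12 (i3.const_mul _)]
    congr 1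
    ext y
    ring
  rw [h1, mean_value hu hharm] at h0
  nlinarith

/-! ### Decay of the weighted averages -/

/-- On the ball of radius `r ≥ 1` about `x₀`, the weight is bounded below by a multiple of
`r ^ (2d)`, where `d = min δ 0`. -/
lemma weight_lower_bound {n : ℕ} (x₀ : 𝔼 n) (δ : ℝ) {r : ℝ} (hr : 1 ≤ r) {y : 𝔼 n}
    (hy : ‖y‖ ≤ 1) :
    (1 + (‖x₀‖ + 1) ^ 2) ^ min δ 0 * r ^ (2 * min δ 0) ≤ (1 + ‖x₀ + r • y‖ ^ 2) ^ δ := by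
  have hr0 : 0 ≤ r := by linarith
  have hn : ‖x₀ + r • y‖ ≤ (‖x₀‖ + 1) * r := by
    have h := norm_add_le x₀ (r • y)
    rw [norm_smul, Real.norm_of_nonneg hr0] at h
    nlinarith [norm_nonneg x₀]
  have hle : 1 + ‖x₀ + r • y‖ ^ 2 ≤ (1 + (‖x₀‖ + 1) ^ 2) * r ^ 2 := by
    have := pow_le_pow_left₀ (norm_nonneg _) hn 2
    nlinarith
  calc (1 + (‖x₀‖ + 1) ^ 2) ^ min δ 0 * r ^ (2 * min δ 0)
      = ((1 + (‖x₀‖ + 1) ^ 2) * r ^ 2) ^ min δ 0 := by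
        rw [Real.mul_rpow (by positivity) (by positivity), Real.rpow_mul hr0]
        norm_num
    _ ≤ (1 + ‖x₀ + r • y‖ ^ 2) ^ min δ 0 :=
        Real.rpow_le_rpow_of_nonpos (by positivity) hle (min_le_right _ _)
    _ ≤ _ := Real.rpow_le_rpow_of_exponent_le (by nlinarith [sq_nonneg ‖x₀ + r • y‖])
        (min_le_left _ _)

/-- Weighted Liouville theorem: a `C²` function on `ℝⁿ` which is harmonic everywhere
and square-integrable with weight `(1+‖x‖²)^δ` for some `δ > -n/2` vanishes
identically. -/
theorem weighted_liouville (n : ℕ) (hn : 1 ≤ n)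
    (u : EuclideanSpace ℝ (Fin n) → ℝ) (hu : ContDiff ℝ 2 u)
    (hharm : ∀ x, lap n u x = 0)
    (δ : ℝ) (hδ : -(n : ℝ) / 2 < δ)
    (hint : Integrable (fun x : EuclideanSpace ℝ (Fin n) =>
      (u x) ^ 2 * (1 + ‖x‖ ^ 2) ^ δ)) :
    ∀ x, u x = 0 := by
  intro x₀
  set w : (𝔼 n) → ℝ := fun x => (u x) ^ 2 * (1 + ‖x‖ ^ 2) ^ δ with hw
  set d := min δ 0 with hd
  set K : ℝ := (1 + (‖x₀‖ + 1) ^ 2) ^ d with hK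
  have hKpos : 0 < K := Real.rpow_pos_of_pos (by positivity) _
  have hdn : 0 < n + 2 * d := by
    have : -(n : ℝ) / 2 < d := lt_min hδ (by
      have : (1 : ℝ) ≤ n := by exact_mod_cast hn
      linarith)
    linarith
  have hw0 : ∀ x, 0 ≤ w x := fun x => by positivity
  have hbound : ∀ r : ℝ, 1 ≤ r →
      u x₀ ^ 2 * ∫ y : 𝔼 n, bump y ≤ (K⁻¹ * ∫ x, w x) * r ^ (-(n + 2 * d)) := by
    intro r hr
    have hr0 : 0 < r := by linarith
    have hc : 0 < K * r ^ (2 * d) := mul_pos hKpos (Real.rpow_pos_of_pos hr0 _)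
    have hwr : Integrable fun y => w (x₀ + r • y) :=
      (hint.comp_add_left x₀).comp_smul hr0.ne'
    have hpt : ∀ y, u (x₀ + r • y) ^ 2 * bump y ≤ (K * r ^ (2 * d))⁻¹ * w (x₀ + r • y) := by
      intro y
      rcases lt_or_ge 1 ‖y‖ with hy | hy
      · rw [bump_eq_zero hy, mul_zero]
        exact mul_nonneg (inv_nonneg.2 hc.le) (hw0 _)
      rw [inv_mul_eq_div, le_div_iff₀ hc, mul_assoc]
      refine mul_le_mul_of_nonneg_left ?_ (sq_nonneg _)
      exact (mul_le_of_le_one_left hc.le (bump_le_one y)).trans (weight_lower_bound x₀ δ hr hy)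
    have huc : Continuous u := hu.continuous
    have hbc := continuous_bump (n := n)
    calc u x₀ ^ 2 * ∫ y : 𝔼 n, bump y ≤ ∫ y, u (x₀ + r • y) ^ 2 * bump y :=
          sq_mean_value hu hharm x₀ r
      _ ≤ ∫ y, (K * r ^ (2 * d))⁻¹ * w (x₀ + r • y) :=
          integral_mono
            (integrable_of_unit (by fun_prop) fun y hy => by simp [bump_eq_zero hy])
            (hwr.const_mul _) hpt
      _ = (K * r ^ (2 * d))⁻¹ * ((r ^ n)⁻¹ * ∫ x, w x) := by
          rw [integral_const_mul, Measure.integral_comp_smul volume (fun z => w (x₀ + z)) r,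
            integral_add_left_eq_self w x₀, finrank_euclideanSpace_fin, smul_eq_mul,
            abs_of_pos (by positivity)]
      _ = (K⁻¹ * ∫ x, w x) * r ^ (-(n + 2 * d)) := by
          rw [Real.rpow_neg hr0.le, Real.rpow_add hr0, Real.rpow_natCast, mul_inv, mul_inv]
          ring
  have hlim : Tendsto (fun r : ℝ => (K⁻¹ * ∫ x, w x) * r ^ (-(n + 2 * d))) atTop (𝓝 0) := by
    simpa using (tendsto_rpow_neg_atTop hdn).const_mul (K⁻¹ * ∫ x, w x)
  have hle : u x₀ ^ 2 * ∫ y : 𝔼 n, bump y ≤ 0 :=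
    ge_of_tendsto hlim ((eventually_ge_atTop 1).mono hbound)
  have hsq : u x₀ ^ 2 ≤ 0 := nonpos_of_mul_nonpos_left hle integral_bump_pos
  exact pow_eq_zero_iff two_ne_zero |>.1 (le_antisymm hsq (sq_nonneg _))
end

section
/- Isomorphism property of the flat Laplacian in weighted spaces (model case): let n ≥ 3 and let δ be a real number with −n/2 < δ < n/2 − 2. For every smooth compactly supported f : ℝ^n → ℝ there exists a unique smooth function u : ℝ^n → ℝ with ∫_{ℝ^n} u(x)² (1+‖x‖²)^δ dx < ∞ such that Δu = f on ℝ^n. -/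
/-!
Existence. The kernel `K(t) = |t|^(2-n)` is locally integrable and `ΔK = -c δ₀` with `c > 0`
(`integral_kernel_mul_lap`): for the regularization `(|t|² + ε²)^((2-n)/2)` the Laplacian is
`-n(n-2) ε² (|t|² + ε²)^(-(n+2)/2)`, a multiple of an approximate identity as `ε → 0`. Hence the
Newtonian potential of `-f/c` is a smooth solution (`lap_newton`). Since `f` has compact support,
the potential is `O(|x|^(2-n))` at infinity (`newton_isBigO`), so its square times
`(1+|x|²)^δ` is integrable precisely because `2(n-2) - 2δ > n`, that is `δ < n/2 - 2`.

Uniqueness. The difference `w` of two solutions is harmonic and lies in the same weighted space.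
Let `ψ ≥ 0` be a radial bump function such that `y ψ(y)` is the gradient of a compactly supported
function. Then `d/dR ∫ w(a + R y) ψ(y) dy = ∫ ∇w(a + R y) · y ψ(y) dy` vanishes after an
integration by parts, which gives the mean value property `w(a) ∫ ψ = ∫ w(a + R y) ψ(y) dy`
for all `R` (`mean_value`). By Cauchy–Schwarz `w(a)² ∫ ψ ≤ ∫ w(a + R y)² ψ(y) dy`, and the right
side is `O(R^(2 max(0, -δ) - n))`, which tends to `0` because `δ > -n/2` (`harmonic_eq_zero`).
-/

open MeasureTheory

/-- The directional derivative of `u` in the direction `v`. -/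
noncomputable def pder {n : ℕ} (v : EuclideanSpace ℝ (Fin n))
    (u : EuclideanSpace ℝ (Fin n) → ℝ) : EuclideanSpace ℝ (Fin n) → ℝ :=
  fun x => fderiv ℝ u x v

/-! ### Directional derivatives and Green's identity -/

lemma contDiff_pder {n : ℕ} {u : EuclideanSpace ℝ (Fin n) → ℝ} (hu : ContDiff ℝ (⊤ : ℕ∞) u)
    (v : EuclideanSpace ℝ (Fin n)) : ContDiff ℝ (⊤ : ℕ∞) (pder v u) :=
  (hu.fderiv_right (m := (⊤ : ℕ∞)) (by simp)).clm_apply contDiff_const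

lemma hasCompactSupport_pder {n : ℕ} {u : EuclideanSpace ℝ (Fin n) → ℝ}
    (hu : HasCompactSupport u) (v : EuclideanSpace ℝ (Fin n)) :
    HasCompactSupport (pder v u) :=
  hu.fderiv_apply ℝ v

lemma lap_eq {n : ℕ} {u : EuclideanSpace ℝ (Fin n) → ℝ} (hu : ContDiff ℝ (⊤ : ℕ∞) u)
    (x : EuclideanSpace ℝ (Fin n)) :
    lap n u x = ∑ i : Fin n,
      pder (EuclideanSpace.single i 1) (pder (EuclideanSpace.single i 1) u) x := by
  unfold lap
  refine Finset.sum_congr rfl fun i _ => ?_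
  rw [iteratedFDeriv_two_apply]
  have h : DifferentiableAt ℝ (fderiv ℝ u) x :=
    ((hu.fderiv_right (m := (⊤ : ℕ∞)) (by simp)).differentiable (by simp)) x
  unfold pder
  rw [fderiv_clm_apply h (differentiableAt_const _)]
  simp

lemma contDiff_lap {n : ℕ} {u : EuclideanSpace ℝ (Fin n) → ℝ} (hu : ContDiff ℝ (⊤ : ℕ∞) u) :
    ContDiff ℝ (⊤ : ℕ∞) (lap n u) := by
  rw [funext (lap_eq hu)]
  exact ContDiff.sum fun i _ => contDiff_pder (contDiff_pder hu _) _

lemma integral_mul_pder {n : ℕ} {g h : EuclideanSpace ℝ (Fin n) → ℝ}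
    (hg : ContDiff ℝ (⊤ : ℕ∞) g) (hh : ContDiff ℝ (⊤ : ℕ∞) h) (hc : HasCompactSupport h)
    (v : EuclideanSpace ℝ (Fin n)) :
    ∫ x, g x * pder v h x = -∫ x, pder v g x * h x := by
  refine integral_mul_fderiv_eq_neg_fderiv_mul_of_integrable ?_ ?_ ?_ ?_ ?_
  · exact ((contDiff_pder hg v).continuous.mul hh.continuous).integrable_of_hasCompactSupport
      hc.mul_left
  · exact (hg.continuous.mul (contDiff_pder hh v).continuous).integrable_of_hasCompactSupport
      (hasCompactSupport_pder hc v).mul_left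
  · exact (hg.continuous.mul hh.continuous).integrable_of_hasCompactSupport hc.mul_left
  · exact fun x _ => hg.differentiable (by simp) x
  · exact fun x _ => hh.differentiable (by simp) x

lemma hasCompactSupport_lap {n : ℕ} {u : EuclideanSpace ℝ (Fin n) → ℝ}
    (hu : ContDiff ℝ (⊤ : ℕ∞) u) (hc : HasCompactSupport u) : HasCompactSupport (lap n u) := by
  rw [funext (lap_eq hu)]
  refine hc.mono' fun x hx => ?_
  obtain ⟨i, -, hi⟩ := Finset.exists_ne_zero_of_sum_ne_zero hx
  exact (tsupport_fderiv_apply_subset ℝ _).trans (tsupport_fderiv_apply_subset ℝ _)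
    (subset_tsupport _ hi)

/-- Green's second identity, without boundary terms. -/
lemma integral_mul_lap {n : ℕ} {g h : EuclideanSpace ℝ (Fin n) → ℝ}
    (hg : ContDiff ℝ (⊤ : ℕ∞) g) (hh : ContDiff ℝ (⊤ : ℕ∞) h) (hc : HasCompactSupport h) :
    ∫ x, g x * lap n h x = ∫ x, lap n g x * h x := by
  simp only [lap_eq hg, lap_eq hh, Finset.mul_sum, Finset.sum_mul]
  rw [integral_finsetSum, integral_finsetSum]
  · refine Finset.sum_congr rfl fun i _ => ?_
    rw [integral_mul_pder hg (contDiff_pder hh _) (hasCompactSupport_pder hc _),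
      integral_mul_pder (contDiff_pder hg _) hh hc, neg_neg]
  · intro i _
    exact ((contDiff_pder (contDiff_pder hg _) _).continuous.mul
      hh.continuous).integrable_of_hasCompactSupport hc.mul_left
  · intro i _
    exact (hg.continuous.mul (contDiff_pder (contDiff_pder hh _) _).continuous
      ).integrable_of_hasCompactSupport
        (hasCompactSupport_pder (hasCompactSupport_pder hc _) _).mul_left

/-! ### Newtonian potentials -/

lemma contDiff_regKernel {n : ℕ} {ε : ℝ} (hε : 0 < ε) (p : ℝ) :
    ContDiff ℝ (⊤ : ℕ∞) (fun t : EuclideanSpace ℝ (Fin n) => (‖t‖ ^ 2 + ε ^ 2) ^ p) :=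
  ((contDiff_norm_sq ℝ).add contDiff_const).rpow_const_of_ne fun x => by positivity

lemma pder_regKernel {n : ℕ} {ε : ℝ} (hε : 0 < ε) (p : ℝ) (i : Fin n)
    (t : EuclideanSpace ℝ (Fin n)) :
    pder (EuclideanSpace.single i 1)
      (fun t : EuclideanSpace ℝ (Fin n) => (‖t‖ ^ 2 + ε ^ 2) ^ p) t =
      2 * p * (t i * (‖t‖ ^ 2 + ε ^ 2) ^ (p - 1)) := by
  have h1 : HasFDerivAt (fun t : EuclideanSpace ℝ (Fin n) => ‖t‖ ^ 2 + ε ^ 2)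
      (2 • innerSL ℝ t) t := (hasStrictFDerivAt_norm_sq t).hasFDerivAt.add_const _
  have h2 := h1.rpow_const (p := p) (Or.inl (by positivity))
  unfold pder
  rw [h2.fderiv]
  simp [EuclideanSpace.inner_single_right]
  ring

/-- Regularizing the Newtonian kernel by `ε` turns its Laplacian into a multiple of an
approximate identity. -/
lemma lap_regKernel {n : ℕ} {ε : ℝ} (hε : 0 < ε) (t : EuclideanSpace ℝ (Fin n)) :
    lap n (fun t : EuclideanSpace ℝ (Fin n) => (‖t‖ ^ 2 + ε ^ 2) ^ (-((n : ℝ) - 2) / 2)) t =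
      -((n : ℝ) * (n - 2)) * (ε ^ 2 * (‖t‖ ^ 2 + ε ^ 2) ^ (-((n : ℝ) + 2) / 2)) := by
  rw [lap_eq (contDiff_regKernel hε _)]
  set p : ℝ := -((n : ℝ) - 2) / 2 with hp
  have hpos : 0 < ‖t‖ ^ 2 + ε ^ 2 := by positivity
  have key : ∀ i : Fin n, pder (EuclideanSpace.single i 1) (pder (EuclideanSpace.single i 1)
      (fun t : EuclideanSpace ℝ (Fin n) => (‖t‖ ^ 2 + ε ^ 2) ^ p)) t =
      2 * p * (‖t‖ ^ 2 + ε ^ 2) ^ (p - 2) *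
        ((‖t‖ ^ 2 + ε ^ 2) + 2 * (p - 1) * t i ^ 2) := by
    intro i
    rw [funext (pder_regKernel hε p i)]
    have h1 : HasFDerivAt (fun t : EuclideanSpace ℝ (Fin n) => t i)
        (EuclideanSpace.proj i : EuclideanSpace ℝ (Fin n) →L[ℝ] ℝ) t :=
      (EuclideanSpace.proj i : EuclideanSpace ℝ (Fin n) →L[ℝ] ℝ).hasFDerivAt
    have h2 := ((contDiff_regKernel (n := n) hε (p - 1)).differentiable (by simp) t).hasFDerivAt
    have h3 := pder_regKernel hε (p - 1) i t
    have h4 := (h1.mul h2).const_mul (2 * p)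
    unfold pder at h3 ⊢
    erw [h4.fderiv]
    simp only [smul_apply, add_apply, h3, smul_eq_mul]
    have e1 : (‖t‖ ^ 2 + ε ^ 2) ^ (p - 1) =
        (‖t‖ ^ 2 + ε ^ 2) ^ (p - 2) * (‖t‖ ^ 2 + ε ^ 2) := by
      rw [← Real.rpow_add_one hpos.ne']; congr 1; ring
    have e2 : p - 1 - 1 = p - 2 := by ring
    rw [e2, e1]
    simp
    ring
  rw [Finset.sum_congr rfl fun i _ => key i, ← Finset.mul_sum, Finset.sum_add_distrib,
    ← Finset.mul_sum, ← EuclideanSpace.real_norm_sq_eq]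
  have e3 : -((n : ℝ) + 2) / 2 = p - 2 := by rw [hp]; ring
  rw [e3]
  simp only [Finset.sum_const, Finset.card_univ, Fintype.card_fin, nsmul_eq_mul]
  rw [show (2 * (p - 1) : ℝ) = -n by rw [hp]; ring, show (2 * p : ℝ) = -(n - 2) by rw [hp]; ring]
  ring

lemma locallyIntegrable_kernel {n : ℕ} (hn : 3 ≤ n) :
    LocallyIntegrable (fun t : EuclideanSpace ℝ (Fin n) => ‖t‖ ^ (-((n : ℝ) - 2))) volume := by
  refine locallyIntegrable_of_norm_le_rpow (C := 1) (α := (n : ℝ) - 2) ?_ ?_ ?_ ?_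
  · simp; omega
  · simp
  · refine Filter.Eventually.of_forall fun t => ?_
    rw [one_mul, Real.norm_of_nonneg (by positivity)]
  · exact (measurable_norm.pow_const _).aestronglyMeasurable

/-- The constant `c > 0` for which `Δ |x|^(2-n) = -c δ₀` in the sense of distributions. It is the
mass of the approximate identity produced by `lap_regKernel`. -/
noncomputable def newtonConst (n : ℕ) : ℝ :=
  (n : ℝ) * (n - 2) * ∫ y : EuclideanSpace ℝ (Fin n), (1 + ‖y‖ ^ 2) ^ (-((n : ℝ) + 2) / 2)

lemma integrable_profile (n : ℕ) :
    Integrable (fun y : EuclideanSpace ℝ (Fin n) => (1 + ‖y‖ ^ 2) ^ (-((n : ℝ) + 2) / 2)) :=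
  integrable_rpow_neg_one_add_norm_sq (by simp)

lemma newtonConst_pos {n : ℕ} (hn : 3 ≤ n) : 0 < newtonConst n := by
  have hn' : (3 : ℝ) ≤ n := by exact_mod_cast hn
  refine mul_pos (mul_pos (by linarith) (by linarith)) ?_
  rw [integral_pos_iff_support_of_nonneg (fun y => by positivity) (integrable_profile n)]
  have : Function.support
      (fun y : EuclideanSpace ℝ (Fin n) => (1 + ‖y‖ ^ 2) ^ (-((n : ℝ) + 2) / 2)) = Set.univ := by
    ext y
    simp only [Function.mem_support, Set.mem_univ, iff_true]
    positivity
  rw [this]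
  exact isOpen_univ.measure_pos _ ⟨0, trivial⟩

/-- Integration against the regularized kernel, after rescaling by `ε`. -/
lemma integral_regKernel_mul_lap {n : ℕ} {g : EuclideanSpace ℝ (Fin n) → ℝ}
    (hg : ContDiff ℝ (⊤ : ℕ∞) g) (hc : HasCompactSupport g) {ε : ℝ} (hε : 0 < ε) :
    ∫ t, (‖t‖ ^ 2 + ε ^ 2) ^ (-((n : ℝ) - 2) / 2) * lap n g t =
      -((n : ℝ) * (n - 2)) * ∫ y, (1 + ‖y‖ ^ 2) ^ (-((n : ℝ) + 2) / 2) * g (ε • y) := by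
  rw [integral_mul_lap (contDiff_regKernel hε _) hg hc]
  simp only [lap_regKernel hε, mul_assoc]
  rw [integral_const_mul]
  congr 1
  have h := Measure.integral_comp_smul_of_nonneg volume
    (fun t : EuclideanSpace ℝ (Fin n) =>
      ε ^ 2 * (‖t‖ ^ 2 + ε ^ 2) ^ (-((n : ℝ) + 2) / 2) * g t) ε (hR := hε.le)
  rw [finrank_euclideanSpace_fin, smul_eq_mul, eq_inv_mul_iff_mul_eq₀ (by positivity)] at h
  simp only [mul_assoc] at h
  rw [← h, ← integral_const_mul]
  refine integral_congr_ae (Filter.Eventually.of_forall fun y => ?_)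
  have e : ‖ε • y‖ ^ 2 + ε ^ 2 = ε ^ 2 * (1 + ‖y‖ ^ 2) := by
    rw [norm_smul, Real.norm_of_nonneg hε.le]; ring
  have e2 : (ε ^ 2) ^ (-((n : ℝ) + 2) / 2) = (ε ^ (n + 2))⁻¹ := by
    rw [← Real.rpow_natCast ε 2, ← Real.rpow_mul hε.le, ← Real.rpow_natCast ε (n + 2),
      ← Real.rpow_neg hε.le]
    congr 1; push_cast; ring
  simp only [e]
  rw [Real.mul_rpow (by positivity) (by positivity), e2]
  field_simp
  ring

/-- The distributional Laplacian of `|t|^(2-n)` is a negative multiple of the Dirac mass. -/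
lemma integral_kernel_mul_lap {n : ℕ} (hn : 3 ≤ n) {g : EuclideanSpace ℝ (Fin n) → ℝ}
    (hg : ContDiff ℝ (⊤ : ℕ∞) g) (hc : HasCompactSupport g) :
    ∫ t, ‖t‖ ^ (-((n : ℝ) - 2)) * lap n g t = -newtonConst n * g 0 := by
  have hn' : (3 : ℝ) ≤ n := by exact_mod_cast hn
  have hlc := (contDiff_lap hg).continuous
  have hls := hasCompactSupport_lap hg hc
  have : Nonempty (Fin n) := ⟨⟨0, by omega⟩⟩
  have T1 : Filter.Tendsto (fun ε : ℝ => ∫ t, (‖t‖ ^ 2 + ε ^ 2) ^ (-((n : ℝ) - 2) / 2) * lap n g t)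
      (nhdsWithin 0 (Set.Ioi 0)) (nhds (∫ t, ‖t‖ ^ (-((n : ℝ) - 2)) * lap n g t)) := by
    refine tendsto_integral_filter_of_dominated_convergence
      (fun t => ‖‖t‖ ^ (-((n : ℝ) - 2)) * lap n g t‖) ?_ ?_ ?_ ?_
    · filter_upwards [self_mem_nhdsWithin] with ε hε
      exact ((contDiff_regKernel hε _).continuous.mul hlc).aestronglyMeasurable
    · filter_upwards [self_mem_nhdsWithin] with ε hε
      have hε' : 0 < ε := hε
      filter_upwards [Measure.ae_ne volume (0 : EuclideanSpace ℝ (Fin n))] with t ht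
      have ht' : 0 < ‖t‖ := norm_pos_iff.2 ht
      rw [norm_mul, norm_mul]
      gcongr
      rw [Real.norm_of_nonneg (by positivity), Real.norm_of_nonneg (by positivity)]
      rw [show ‖t‖ ^ (-((n : ℝ) - 2)) = (‖t‖ ^ 2) ^ (-((n : ℝ) - 2) / 2) by
        rw [← Real.rpow_natCast, ← Real.rpow_mul ht'.le]; congr 1; push_cast; ring]
      exact Real.rpow_le_rpow_of_nonpos (by positivity) (by nlinarith) (by linarith)
    · exact ((locallyIntegrable_kernel hn).integrable_smul_right_of_hasCompactSupport hlc hls).norm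
    · filter_upwards [Measure.ae_ne volume (0 : EuclideanSpace ℝ (Fin n))] with t ht
      have ht' : 0 < ‖t‖ := norm_pos_iff.2 ht
      rw [show ‖t‖ ^ (-((n : ℝ) - 2)) = (‖t‖ ^ 2 + 0 ^ 2) ^ (-((n : ℝ) - 2) / 2) by
        rw [zero_pow two_ne_zero, add_zero, ← Real.rpow_natCast, ← Real.rpow_mul ht'.le]
        congr 1; push_cast; ring]
      refine Filter.Tendsto.mono_left ?_ nhdsWithin_le_nhds
      have : ContinuousAt (fun ε : ℝ => (‖t‖ ^ 2 + ε ^ 2) ^ (-((n : ℝ) - 2) / 2) * lap n g t) 0 := by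
        refine ContinuousAt.mul (ContinuousAt.rpow_const (by fun_prop) (Or.inl ?_))
          continuousAt_const
        positivity
      exact this
  have T2 : Filter.Tendsto (fun ε : ℝ => -((n : ℝ) * (n - 2)) *
        ∫ y, (1 + ‖y‖ ^ 2) ^ (-((n : ℝ) + 2) / 2) * g (ε • y))
      (nhdsWithin 0 (Set.Ioi 0)) (nhds (-newtonConst n * g 0)) := by
    have e : -newtonConst n * g 0 = -((n : ℝ) * (n - 2)) *
        ∫ y : EuclideanSpace ℝ (Fin n), (1 + ‖y‖ ^ 2) ^ (-((n : ℝ) + 2) / 2) * g 0 := by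
      rw [integral_mul_const, newtonConst]; ring
    rw [e]
    refine Filter.Tendsto.const_mul _ ?_
    obtain ⟨C, hC⟩ := hg.continuous.bounded_above_of_compact_support hc
    refine tendsto_integral_filter_of_dominated_convergence
      (fun y => (1 + ‖y‖ ^ 2) ^ (-((n : ℝ) + 2) / 2) * C) ?_ ?_ ?_ ?_
    · refine Filter.Eventually.of_forall fun ε => ?_
      exact (integrable_profile n).aestronglyMeasurable.mul
        (hg.continuous.comp (continuous_const_smul ε)).aestronglyMeasurable
    · refine Filter.Eventually.of_forall fun ε => Filter.Eventually.of_forall fun y => ?_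
      rw [norm_mul, Real.norm_of_nonneg (by positivity)]
      gcongr
      exact hC _
    · exact (integrable_profile n).mul_const _
    · refine Filter.Eventually.of_forall fun y => Filter.Tendsto.const_mul _ ?_
      refine Filter.Tendsto.mono_left ?_ nhdsWithin_le_nhds
      have : ContinuousAt (fun ε : ℝ => g (ε • y)) 0 :=
        (hg.continuous.comp (continuous_id.smul continuous_const)).continuousAt
      simpa [ContinuousAt] using this
  refine tendsto_nhds_unique T1 (T2.congr' ?_)
  filter_upwards [self_mem_nhdsWithin] with ε hε
  exact (integral_regKernel_mul_lap hg hc hε).symm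

/-- The convolution of `g` with the (unnormalized) Newtonian kernel `|t|^(2-n)`. -/
noncomputable def newton {n : ℕ} (g : EuclideanSpace ℝ (Fin n) → ℝ) :
    EuclideanSpace ℝ (Fin n) → ℝ :=
  convolution (fun t : EuclideanSpace ℝ (Fin n) => ‖t‖ ^ (-((n : ℝ) - 2))) g
    (ContinuousLinearMap.mul ℝ ℝ) volume

lemma newton_apply {n : ℕ} (g : EuclideanSpace ℝ (Fin n) → ℝ) (x : EuclideanSpace ℝ (Fin n)) :
    newton g x = ∫ t, ‖t‖ ^ (-((n : ℝ) - 2)) * g (x - t) := rfl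

lemma contDiff_newton {n : ℕ} (hn : 3 ≤ n) {g : EuclideanSpace ℝ (Fin n) → ℝ}
    (hg : ContDiff ℝ (⊤ : ℕ∞) g) (hc : HasCompactSupport g) :
    ContDiff ℝ (⊤ : ℕ∞) (newton g) :=
  hc.contDiff_convolution_right _ (locallyIntegrable_kernel hn) hg

lemma integrable_kernel_mul {n : ℕ} (hn : 3 ≤ n) {g : EuclideanSpace ℝ (Fin n) → ℝ}
    (hg : Continuous g) (hc : HasCompactSupport g) (x : EuclideanSpace ℝ (Fin n)) :
    Integrable fun t : EuclideanSpace ℝ (Fin n) => ‖t‖ ^ (-((n : ℝ) - 2)) * g (x - t) :=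
  (locallyIntegrable_kernel hn).integrable_smul_right_of_hasCompactSupport
    (g := fun t => g (x - t)) (by fun_prop) (hc.comp_homeomorph (Homeomorph.subLeft x))

lemma pder_newton {n : ℕ} (hn : 3 ≤ n) {g : EuclideanSpace ℝ (Fin n) → ℝ}
    (hg : ContDiff ℝ (⊤ : ℕ∞) g) (hc : HasCompactSupport g) (v : EuclideanSpace ℝ (Fin n)) :
    pder v (newton g) = newton (pder v g) := by
  funext x
  have h := hc.hasFDerivAt_convolution_right (ContinuousLinearMap.mul ℝ ℝ)
    (locallyIntegrable_kernel hn) (hg.of_le (by exact_mod_cast le_top)) x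
  unfold pder
  erw [h.fderiv]
  rw [convolution_precompR_apply _ (locallyIntegrable_kernel hn) (hc.fderiv ℝ)
    (hg.continuous_fderiv (by simp))]
  rfl

lemma pder_comp_sub {n : ℕ} {g : EuclideanSpace ℝ (Fin n) → ℝ}
    (hg : ContDiff ℝ (⊤ : ℕ∞) g) (x v : EuclideanSpace ℝ (Fin n)) :
    pder v (fun t => g (x - t)) = fun t => -pder v g (x - t) := by
  funext t
  have h1 : HasFDerivAt (fun t : EuclideanSpace ℝ (Fin n) => x - t)
      (-ContinuousLinearMap.id ℝ _) t := (hasFDerivAt_id t).const_sub x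
  have h2 := ((hg.differentiable (by simp) (x - t)).hasFDerivAt).comp t h1
  unfold pder
  erw [h2.fderiv]
  simp

lemma lap_comp_sub {n : ℕ} {g : EuclideanSpace ℝ (Fin n) → ℝ}
    (hg : ContDiff ℝ (⊤ : ℕ∞) g) (x t : EuclideanSpace ℝ (Fin n)) :
    lap n (fun t => g (x - t)) t = lap n g (x - t) := by
  have hg' : ContDiff ℝ (⊤ : ℕ∞) fun t => g (x - t) := hg.comp (contDiff_const.sub contDiff_id)
  rw [lap_eq hg, lap_eq hg']
  refine Finset.sum_congr rfl fun i _ => ?_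
  rw [pder_comp_sub hg, pder_comp_sub (g := fun t => -pder (EuclideanSpace.single i 1) g t)
    (contDiff_pder hg _).neg]
  unfold pder
  simp only
  rw [fderiv_fun_neg (f := fun t => fderiv ℝ g t (EuclideanSpace.single i 1))]
  simp

lemma lap_newton {n : ℕ} (hn : 3 ≤ n) {g : EuclideanSpace ℝ (Fin n) → ℝ}
    (hg : ContDiff ℝ (⊤ : ℕ∞) g) (hc : HasCompactSupport g) (x : EuclideanSpace ℝ (Fin n)) :
    lap n (newton g) x = -newtonConst n * g x := by
  have h := integral_kernel_mul_lap hn (g := fun t => g (x - t))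
    (hg.comp (contDiff_const.sub contDiff_id)) (hc.comp_homeomorph (Homeomorph.subLeft x))
  rw [sub_zero] at h
  rw [← h, lap_eq (contDiff_newton hn hg hc)]
  simp_rw [lap_comp_sub hg, lap_eq hg, Finset.mul_sum]
  rw [integral_finsetSum]
  · refine Finset.sum_congr rfl fun i _ => ?_
    rw [pder_newton hn hg hc, pder_newton hn (contDiff_pder hg _) (hasCompactSupport_pder hc _),
      newton_apply]
  · intro i _
    exact integrable_kernel_mul hn (contDiff_pder (contDiff_pder hg _) _).continuous
      (hasCompactSupport_pder (hasCompactSupport_pder hc _) _) x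

lemma newton_isBigO {n : ℕ} (hn : 3 ≤ n) {g : EuclideanSpace ℝ (Fin n) → ℝ}
    (hg : Continuous g) (hc : HasCompactSupport g) :
    newton g =O[Filter.cocompact (EuclideanSpace ℝ (Fin n))]
      fun x => (1 + ‖x‖ ^ 2) ^ (-((n : ℝ) - 2) / 2) := by
  have hn' : (3 : ℝ) ≤ n := by exact_mod_cast hn
  obtain ⟨S, hS0, hS⟩ := hc.isCompact.isBounded.exists_pos_norm_le
  refine Asymptotics.IsBigO.of_bound
    ((8⁻¹ : ℝ) ^ (-((n : ℝ) - 2) / 2) * ∫ t, ‖g t‖) ?_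
  filter_upwards [(tendsto_norm_cocompact_atTop (E := EuclideanSpace ℝ (Fin n))).eventually_ge_atTop
    (max 1 (2 * S))] with x hx
  have hx1 : 1 ≤ ‖x‖ := (le_max_left _ _).trans hx
  have hx2 : 2 * S ≤ ‖x‖ := (le_max_right _ _).trans hx
  have e : newton g x = ∫ t, ‖x - t‖ ^ (-((n : ℝ) - 2)) * g t := by
    rw [newton_apply, ← integral_sub_left_eq_self _ _ x]
    simp
  rw [e, mul_right_comm, ← integral_const_mul]
  refine norm_integral_le_of_norm_le
    ((hg.norm.integrable_of_hasCompactSupport hc.norm).const_mul _)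
    (Filter.Eventually.of_forall fun t => ?_)
  rw [norm_mul]
  by_cases ht : g t = 0
  · simp [ht]
  gcongr
  have htS : ‖t‖ ≤ S := hS t (subset_tsupport _ ht)
  have h1 : ‖x‖ / 2 ≤ ‖x - t‖ := by
    have := norm_sub_norm_le x t
    linarith
  have h2 : 8⁻¹ * (1 + ‖x‖ ^ 2) ≤ ‖x - t‖ ^ 2 := by nlinarith
  rw [Real.norm_of_nonneg (by positivity), Real.norm_of_nonneg (by positivity),
    ← Real.mul_rpow (by norm_num) (by positivity)]
  rw [show ‖x - t‖ ^ (-((n : ℝ) - 2)) = (‖x - t‖ ^ 2) ^ (-((n : ℝ) - 2) / 2) by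
    rw [← Real.rpow_natCast, ← Real.rpow_mul (norm_nonneg _)]; congr 1; push_cast; ring]
  exact Real.rpow_le_rpow_of_nonpos (by positivity) h2 (by linarith)

lemma integrable_newton {n : ℕ} (hn : 3 ≤ n) {δ : ℝ} (hδ2 : δ < (n : ℝ) / 2 - 2)
    {g : EuclideanSpace ℝ (Fin n) → ℝ}
    (hg : ContDiff ℝ (⊤ : ℕ∞) g) (hc : HasCompactSupport g) :
    Integrable (fun x : EuclideanSpace ℝ (Fin n) => (newton g x) ^ 2 * (1 + ‖x‖ ^ 2) ^ δ) := by
  have hcont : Continuous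
      (fun x : EuclideanSpace ℝ (Fin n) => (newton g x) ^ 2 * (1 + ‖x‖ ^ 2) ^ δ) := by
    refine ((contDiff_newton hn hg hc).continuous.pow 2).mul
      (Continuous.rpow_const (by fun_prop) fun x => Or.inl (by positivity))
  have hO := ((newton_isBigO hn hg.continuous hc).pow 2).mul
    (Asymptotics.isBigO_refl (fun x : EuclideanSpace ℝ (Fin n) => (1 + ‖x‖ ^ 2) ^ δ)
      (Filter.cocompact _))
  refine hcont.locallyIntegrable.integrable_of_isBigO_cocompact hO ?_
  refine Integrable.integrableAtFilter ?_ _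
  have hr : ((Module.finrank ℝ (EuclideanSpace ℝ (Fin n)) : ℕ) : ℝ) < 2 * (n - 2) - 2 * δ := by
    rw [finrank_euclideanSpace_fin]; linarith
  refine (integrable_rpow_neg_one_add_norm_sq hr).congr
    (Filter.Eventually.of_forall fun x => ?_)
  have hp : (0 : ℝ) < 1 + ‖x‖ ^ 2 := by positivity
  simp only
  rw [← Real.rpow_natCast ((1 + ‖x‖ ^ 2) ^ (-((n : ℝ) - 2) / 2)) 2, ← Real.rpow_mul hp.le,
    ← Real.rpow_add hp]
  congr 1; push_cast; ring

lemma exists_solution {n : ℕ} (hn : 3 ≤ n) {δ : ℝ} (hδ2 : δ < (n : ℝ) / 2 - 2)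
    {f : EuclideanSpace ℝ (Fin n) → ℝ}
    (hf : ContDiff ℝ (⊤ : ℕ∞) f) (hc : HasCompactSupport f) :
    ∃ u : EuclideanSpace ℝ (Fin n) → ℝ, ContDiff ℝ (⊤ : ℕ∞) u ∧
      Integrable (fun x : EuclideanSpace ℝ (Fin n) => (u x) ^ 2 * (1 + ‖x‖ ^ 2) ^ δ) ∧
      ∀ x, lap n u x = f x := by
  -- Dividing the source by the constant avoids rescaling the solution.
  set g : EuclideanSpace ℝ (Fin n) → ℝ := fun x => (-newtonConst n)⁻¹ * f x with hg_def
  have hg : ContDiff ℝ (⊤ : ℕ∞) g := contDiff_const.mul hf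
  have hgc : HasCompactSupport g := hc.mul_left
  refine ⟨newton g, contDiff_newton hn hg hgc, integrable_newton hn hδ2 hg hgc, fun x => ?_⟩
  rw [lap_newton hn hg hgc, hg_def, mul_inv_cancel_left₀ (neg_ne_zero.2 (newtonConst_pos hn).ne')]

/-! ### The mean value property and uniqueness -/

lemma deriv_smoothTransition_nonneg (s : ℝ) : 0 ≤ deriv Real.smoothTransition s :=
  Real.smoothTransition.monotone.deriv_nonneg

lemma deriv_smoothTransition_of_nonpos {s : ℝ} (hs : s ≤ 0) :
    deriv Real.smoothTransition s = 0 := by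
  refine IsLocalMin.deriv_eq_zero (Filter.Eventually.of_forall fun t => ?_)
  rw [Real.smoothTransition.zero_of_nonpos hs]
  exact Real.smoothTransition.nonneg t

/-- A smooth radial cutoff supported in the closed unit ball. -/
noncomputable def cutoff {n : ℕ} (y : EuclideanSpace ℝ (Fin n)) : ℝ :=
  Real.smoothTransition (1 - ‖y‖ ^ 2)

/-- A radial averaging weight supported in the closed unit ball. It is chosen so that
`y ↦ weight y • y` is minus the gradient of `cutoff`. -/
noncomputable def weight {n : ℕ} (y : EuclideanSpace ℝ (Fin n)) : ℝ :=
  2 * deriv Real.smoothTransition (1 - ‖y‖ ^ 2)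

lemma contDiff_cutoff {n : ℕ} : ContDiff ℝ (⊤ : ℕ∞) (cutoff (n := n)) :=
  Real.smoothTransition.contDiff.comp (contDiff_const.sub (contDiff_norm_sq ℝ))

lemma hasCompactSupport_cutoff {n : ℕ} : HasCompactSupport (cutoff (n := n)) := by
  refine HasCompactSupport.intro (isCompact_closedBall (0 : EuclideanSpace ℝ (Fin n)) 1)
    fun y hy => Real.smoothTransition.zero_of_nonpos ?_
  simp only [mem_closedBall_zero_iff, not_le] at hy
  nlinarith

lemma continuous_weight {n : ℕ} : Continuous (weight (n := n)) := by
  have h : Continuous (deriv Real.smoothTransition) :=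
    (Real.smoothTransition.contDiff (n := 1)).continuous_deriv (by simp)
  unfold weight
  exact continuous_const.mul (h.comp (by fun_prop))

lemma weight_nonneg {n : ℕ} (y : EuclideanSpace ℝ (Fin n)) : 0 ≤ weight y :=
  mul_nonneg zero_le_two (deriv_smoothTransition_nonneg _)

lemma weight_eq_zero {n : ℕ} {y : EuclideanSpace ℝ (Fin n)} (hy : 1 < ‖y‖) : weight y = 0 := by
  rw [weight, deriv_smoothTransition_of_nonpos (by nlinarith), mul_zero]

lemma hasCompactSupport_weight {n : ℕ} : HasCompactSupport (weight (n := n)) :=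
  HasCompactSupport.intro (isCompact_closedBall (0 : EuclideanSpace ℝ (Fin n)) 1)
    fun y hy => weight_eq_zero (by simpa using hy)

lemma pder_cutoff {n : ℕ} (i : Fin n) (y : EuclideanSpace ℝ (Fin n)) :
    pder (EuclideanSpace.single i 1) cutoff y = -(y i * weight y) := by
  have h1 : HasFDerivAt (fun t : EuclideanSpace ℝ (Fin n) => 1 - ‖t‖ ^ 2)
      (-(2 • innerSL ℝ y)) y := (hasStrictFDerivAt_norm_sq y).hasFDerivAt.const_sub _
  have h2 := ((Real.smoothTransition.contDiff (n := 1)).differentiable (by simp)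
    (1 - ‖y‖ ^ 2)).hasDerivAt.comp_hasFDerivAt y h1
  unfold pder
  erw [h2.fderiv]
  simp [EuclideanSpace.inner_single_right, weight]
  ring

lemma integral_weight_pos {n : ℕ} (hn : 3 ≤ n) :
    0 < ∫ y : EuclideanSpace ℝ (Fin n), weight y := by
  obtain ⟨c, hc, hc'⟩ := exists_deriv_eq_slope Real.smoothTransition zero_lt_one
    Real.smoothTransition.continuous.continuousOn
    ((Real.smoothTransition.contDiff (n := 1)).differentiable (by simp)).differentiableOn
  refine continuous_weight.integral_pos_of_hasCompactSupport_nonneg_nonzero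
    (x := EuclideanSpace.single ⟨0, by omega⟩ (√(1 - c))) hasCompactSupport_weight
    weight_nonneg ?_
  rw [weight, PiLp.norm_single, Real.norm_of_nonneg (Real.sqrt_nonneg _),
    Real.sq_sqrt (by linarith [hc.2]), sub_sub_cancel, hc']
  simp

lemma pder_comp_dilation {n : ℕ} {g : EuclideanSpace ℝ (Fin n) → ℝ}
    (hg : ContDiff ℝ (⊤ : ℕ∞) g) (a v y : EuclideanSpace ℝ (Fin n)) (R : ℝ) :
    pder v (fun y => g (a + R • y)) y = R * pder v g (a + R • y) := by
  have h1 : HasFDerivAt (fun y : EuclideanSpace ℝ (Fin n) => a + R • y)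
      (R • ContinuousLinearMap.id ℝ _) y := ((hasFDerivAt_id y).const_smul R).const_add a
  have h2 := ((hg.differentiable (by simp) (a + R • y)).hasFDerivAt).comp y h1
  unfold pder
  erw [h2.fderiv]
  simp

lemma fderiv_eq_sum_pder {n : ℕ} (g : EuclideanSpace ℝ (Fin n) → ℝ)
    (z y : EuclideanSpace ℝ (Fin n)) :
    fderiv ℝ g z y = ∑ i, pder (EuclideanSpace.single i 1) g z * y i := by
  conv_lhs => rw [← (EuclideanSpace.basisFun (Fin n) ℝ).sum_repr y]
  simp [pder, mul_comm]

/-- The radial derivative of a harmonic function has vanishing weighted average, by the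
divergence theorem. -/
lemma integral_radial_eq_zero {n : ℕ} {w : EuclideanSpace ℝ (Fin n) → ℝ}
    (hw : ContDiff ℝ (⊤ : ℕ∞) w) (hlap : ∀ x, lap n w x = 0)
    (a : EuclideanSpace ℝ (Fin n)) (R : ℝ) :
    ∫ y, fderiv ℝ w (a + R • y) y * weight y = 0 := by
  have hd : ∀ {g : EuclideanSpace ℝ (Fin n) → ℝ}, ContDiff ℝ (⊤ : ℕ∞) g →
      ContDiff ℝ (⊤ : ℕ∞) fun y => g (a + R • y) := fun hg =>
    hg.comp (contDiff_const.add (contDiff_id.const_smul R))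
  have h1 : ∀ y, fderiv ℝ w (a + R • y) y * weight y =
      ∑ i, -(pder (EuclideanSpace.single i 1) w (a + R • y) *
        pder (EuclideanSpace.single i 1) cutoff y) := by
    intro y
    rw [fderiv_eq_sum_pder, Finset.sum_mul]
    refine Finset.sum_congr rfl fun i _ => ?_
    rw [pder_cutoff]; ring
  simp only [h1]
  rw [integral_finsetSum]
  · have h2 : ∀ i : Fin n, ∫ y, -(pder (EuclideanSpace.single i 1) w (a + R • y) *
        pder (EuclideanSpace.single i 1) cutoff y) =
        ∫ y, R * (pder (EuclideanSpace.single i 1) (pder (EuclideanSpace.single i 1) w)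
          (a + R • y) * cutoff y) := by
      intro i
      rw [integral_neg, integral_mul_pder (hd (contDiff_pder hw _)) contDiff_cutoff
        hasCompactSupport_cutoff, neg_neg]
      simp only [pder_comp_dilation (contDiff_pder hw _), mul_assoc]
    rw [Finset.sum_congr rfl fun i _ => h2 i, ← integral_finsetSum]
    · have h3 : ∀ y, ∑ i, R * (pder (EuclideanSpace.single i 1)
          (pder (EuclideanSpace.single i 1) w) (a + R • y) * cutoff y) = 0 := by
        intro y
        rw [← Finset.mul_sum, ← Finset.sum_mul, ← lap_eq hw, hlap]
        simp
      simp [h3]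
    · intro i _
      exact (((hd (contDiff_pder (contDiff_pder hw _) _)).continuous.mul
        contDiff_cutoff.continuous).integrable_of_hasCompactSupport
          hasCompactSupport_cutoff.mul_left).const_mul _
  · intro i _
    exact (((hd (contDiff_pder hw _)).continuous.mul
      (contDiff_pder contDiff_cutoff _).continuous).integrable_of_hasCompactSupport
        (hasCompactSupport_pder hasCompactSupport_cutoff _).mul_left).neg

/-- Mean value property: weighted averages of a harmonic function over balls of arbitrary
radius `R` around `a` agree with its value at `a`. -/
lemma mean_value_s10 {n : ℕ} {w : EuclideanSpace ℝ (Fin n) → ℝ}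
    (hw : ContDiff ℝ (⊤ : ℕ∞) w) (hlap : ∀ x, lap n w x = 0)
    (a : EuclideanSpace ℝ (Fin n)) (R : ℝ) :
    ∫ y, w (a + R • y) * weight y =
      w a * ∫ y : EuclideanSpace ℝ (Fin n), weight y := by
  have hcw : Continuous w := hw.continuous
  have hcd : Continuous (fderiv ℝ w) := hw.continuous_fderiv (by simp)
  have hder : ∀ R₀ : ℝ, HasDerivAt (fun R : ℝ => ∫ y, w (a + R • y) * weight y) 0 R₀ := by
    intro R₀
    have hcomp : IsCompact (Metric.closedBall R₀ 1 ×ˢ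
        Metric.closedBall (0 : EuclideanSpace ℝ (Fin n)) 1) :=
      (isCompact_closedBall _ _).prod (isCompact_closedBall _ _)
    have hcF : Continuous fun p : ℝ × EuclideanSpace ℝ (Fin n) =>
        fderiv ℝ w (a + p.1 • p.2) p.2 := (hcd.comp (by fun_prop)).clm_apply continuous_snd
    obtain ⟨C, hC⟩ := hcomp.exists_bound_of_continuousOn hcF.continuousOn
    have h := (hasDerivAt_integral_of_dominated_loc_of_deriv_le (μ := volume) (x₀ := R₀)
      (F := fun R y => w (a + R • y) * weight y)
      (F' := fun R y => fderiv ℝ w (a + R • y) y * weight y)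
      (bound := fun y => C * weight y) (Metric.closedBall_mem_nhds R₀ one_pos)
      ?_ ?_ ?_ ?_ ?_ ?_).2
    · rwa [integral_radial_eq_zero hw hlap] at h
    · refine Filter.Eventually.of_forall fun R => ?_
      exact ((hcw.comp (by fun_prop)).mul continuous_weight).aestronglyMeasurable
    · exact ((hcw.comp (by fun_prop)).mul continuous_weight).integrable_of_hasCompactSupport
        hasCompactSupport_weight.mul_left
    · exact (((hcd.comp (by fun_prop)).clm_apply continuous_id).mul
        continuous_weight).aestronglyMeasurable
    · refine Filter.Eventually.of_forall fun y R hR => ?_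
      by_cases hy : ‖y‖ ≤ 1
      · rw [norm_mul, Real.norm_of_nonneg (weight_nonneg y)]
        exact mul_le_mul_of_nonneg_right (hC (R, y) ⟨hR, by simpa using hy⟩) (weight_nonneg y)
      · simp [weight_eq_zero (not_le.1 hy)]
    · exact (continuous_weight.integrable_of_hasCompactSupport
        hasCompactSupport_weight).const_mul _
    · refine Filter.Eventually.of_forall fun y R _ => ?_
      have h1 : HasDerivAt (fun R : ℝ => a + R • y) y R := by
        simpa using ((hasDerivAt_id R).smul_const y).const_add a
      exact ((hw.differentiable (by simp) (a + R • y)).hasFDerivAt.comp_hasDerivAt R h1).mul_const _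
  have h := is_const_of_deriv_eq_zero (fun R => (hder R).differentiableAt)
    (fun R => (hder R).deriv) R 0
  simp only [zero_smul, add_zero] at h
  rw [h, integral_const_mul]

/-- On the ball of radius `R` around `a`, where `R ≥ 1 + ‖a‖`, the factor `(1 + ‖x‖ ^ 2) ^ δ` is
bounded below by a multiple of `R ^ (-2 * σ)`, with `σ = max 0 (-δ)`. -/
lemma one_le_weight_mul {n : ℕ} (δ : ℝ) {a y : EuclideanSpace ℝ (Fin n)} {R : ℝ}
    (hR : 1 + ‖a‖ ≤ R) (hy : ‖y‖ ≤ 1) :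
    1 ≤ (5 * R ^ 2) ^ (max 0 (-δ)) * (1 + ‖a + R • y‖ ^ 2) ^ δ := by
  have hR1 : 1 ≤ R := by linarith [norm_nonneg a]
  have hz : ‖a + R • y‖ ≤ 2 * R := by
    refine (norm_add_le _ _).trans ?_
    rw [norm_smul, Real.norm_of_nonneg (by linarith)]
    nlinarith
  have hz1 : 1 + ‖a + R • y‖ ^ 2 ≤ 5 * R ^ 2 := by
    nlinarith [norm_nonneg (a + R • y)]
  have hz0 : 1 ≤ 1 + ‖a + R • y‖ ^ 2 := by nlinarith [norm_nonneg (a + R • y)]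
  calc (1 : ℝ) ≤ (1 + ‖a + R • y‖ ^ 2) ^ (max 0 (-δ) + δ) :=
        Real.one_le_rpow hz0 (by linarith [le_max_right 0 (-δ)])
    _ = (1 + ‖a + R • y‖ ^ 2) ^ (max 0 (-δ)) * (1 + ‖a + R • y‖ ^ 2) ^ δ :=
        Real.rpow_add (by linarith) _ _
    _ ≤ _ := by
        gcongr

/-- Liouville theorem in weighted `L²`: the averages of `w ^ 2` over balls of radius `R` are
`O(R ^ (2 * σ - n))` with `σ = max 0 (-δ)`, and `2 * σ < n` exactly because `-n / 2 < δ`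
(and `0 < n`). -/
lemma harmonic_eq_zero {n : ℕ} (hn : 3 ≤ n) {δ : ℝ} (hδ1 : -(n : ℝ) / 2 < δ)
    {w : EuclideanSpace ℝ (Fin n) → ℝ} (hw : ContDiff ℝ (⊤ : ℕ∞) w)
    (hint : Integrable (fun x : EuclideanSpace ℝ (Fin n) => (w x) ^ 2 * (1 + ‖x‖ ^ 2) ^ δ))
    (hlap : ∀ x, lap n w x = 0) (a : EuclideanSpace ℝ (Fin n)) : w a = 0 := by
  have hcw : Continuous w := hw.continuous
  have hn' : (3 : ℝ) ≤ n := by exact_mod_cast hn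
  set c := ∫ y : EuclideanSpace ℝ (Fin n), weight y with hc
  have hcpos : 0 < c := integral_weight_pos hn
  set σ := max 0 (-δ) with hσ
  have hσn : 2 * σ - n < 0 := by
    have : σ < n / 2 := max_lt (by linarith) (by linarith)
    linarith
  set J := ∫ x : EuclideanSpace ℝ (Fin n), (w x) ^ 2 * (1 + ‖x‖ ^ 2) ^ δ with hJ
  obtain ⟨C, hC⟩ := continuous_weight.bounded_above_of_compact_support
    (hasCompactSupport_weight (n := n))
  have hC0 : 0 ≤ C := (norm_nonneg _).trans (hC 0)
  have hIint : ∀ R : ℝ, Integrable fun y => w (a + R • y) ^ 2 * weight y := fun R =>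
    (((hcw.comp (by fun_prop)).pow 2).mul continuous_weight).integrable_of_hasCompactSupport
      hasCompactSupport_weight.mul_left
  have hI : ∀ R : ℝ, 1 + ‖a‖ ≤ R →
      ∫ y, w (a + R • y) ^ 2 * weight y ≤ C * 5 ^ σ * J * R ^ (2 * σ - n) := by
    intro R hR
    have hR0 : 0 < R := by linarith [norm_nonneg a]
    have hint' : Integrable fun y : EuclideanSpace ℝ (Fin n) =>
        w (a + R • y) ^ 2 * (1 + ‖a + R • y‖ ^ 2) ^ δ :=
      (hint.comp_add_left a).comp_smul hR0.ne'
    calc ∫ y, w (a + R • y) ^ 2 * weight y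
        ≤ ∫ y, C * (5 * R ^ 2) ^ σ * (w (a + R • y) ^ 2 * (1 + ‖a + R • y‖ ^ 2) ^ δ) := by
          refine integral_mono (hIint R) (hint'.const_mul _) fun y => ?_
          simp only
          by_cases hy : ‖y‖ ≤ 1
          · have h1 := one_le_weight_mul δ hR hy
            have h2 : weight y ≤ C := (le_abs_self _).trans (hC y)
            calc w (a + R • y) ^ 2 * weight y ≤ w (a + R • y) ^ 2 * C * 1 := by
                  rw [mul_one]; gcongr
              _ ≤ w (a + R • y) ^ 2 * C * ((5 * R ^ 2) ^ σ * (1 + ‖a + R • y‖ ^ 2) ^ δ) := by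
                  gcongr
              _ = _ := by ring
          · rw [weight_eq_zero (not_le.1 hy), mul_zero]
            positivity
      _ = C * (5 * R ^ 2) ^ σ * ((R ^ n)⁻¹ * J) := by
          rw [integral_const_mul]
          have h := Measure.integral_comp_smul_of_nonneg volume
            (fun x : EuclideanSpace ℝ (Fin n) =>
              w (a + x) ^ 2 * (1 + ‖a + x‖ ^ 2) ^ δ) R (hR := hR0.le)
          rw [h, finrank_euclideanSpace_fin, smul_eq_mul,
            integral_add_left_eq_self (fun x => w x ^ 2 * (1 + ‖x‖ ^ 2) ^ δ) a]
      _ = _ := by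
          rw [Real.mul_rpow (by norm_num) (by positivity), Real.rpow_sub hR0,
            Real.rpow_natCast, Real.rpow_mul hR0.le, Real.rpow_ofNat]
          ring
  have hlim : Filter.Tendsto (fun R : ℝ => C * 5 ^ σ * J * R ^ (2 * σ - n)) Filter.atTop
      (nhds 0) := by
    have := (tendsto_rpow_neg_atTop (y := n - 2 * σ) (by linarith)).const_mul (C * 5 ^ σ * J)
    simpa using this
  -- Cauchy–Schwarz for the average, in the form `0 ≤ ∫ (w - w a)² weight`.
  have hCS : ∀ R : ℝ, w a ^ 2 * c ≤ ∫ y, w (a + R • y) ^ 2 * weight y := by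
    intro R
    have h0 : 0 ≤ ∫ y, (w (a + R • y) - w a) ^ 2 * weight y :=
      integral_nonneg fun y => mul_nonneg (sq_nonneg _) (weight_nonneg y)
    have hi1 : Integrable fun y => w (a + R • y) * weight y :=
      ((hcw.comp (by fun_prop)).mul continuous_weight).integrable_of_hasCompactSupport
        hasCompactSupport_weight.mul_left
    have hi2 : Integrable (weight (n := n)) :=
      continuous_weight.integrable_of_hasCompactSupport hasCompactSupport_weight
    have e : ∫ y, (w (a + R • y) - w a) ^ 2 * weight y =
        (∫ y, w (a + R • y) ^ 2 * weight y) - 2 * w a * (∫ y, w (a + R • y) * weight y) +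
          w a ^ 2 * c := by
      have hi3 : Integrable fun y =>
          w (a + R • y) ^ 2 * weight y - 2 * w a * (w (a + R • y) * weight y) :=
        (hIint R).sub (hi1.const_mul _)
      rw [hc, ← integral_const_mul, ← integral_const_mul, ← integral_sub (hIint R)
        (hi1.const_mul _), ← integral_add hi3 (hi2.const_mul _)]
      refine integral_congr_ae (Filter.Eventually.of_forall fun y => ?_)
      simp only
      ring
    rw [e, mean_value_s10 hw hlap a R] at h0
    linarith
  have hle : w a ^ 2 * c ≤ 0 := by
    refine ge_of_tendsto hlim ?_
    filter_upwards [Filter.eventually_ge_atTop (1 + ‖a‖)] with R hR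
    exact (hCS R).trans (hI R hR)
  have : w a ^ 2 ≤ 0 := nonpos_of_mul_nonpos_left hle hcpos
  exact pow_eq_zero_iff two_ne_zero |>.1 (le_antisymm this (sq_nonneg _))

lemma lap_sub {n : ℕ} {u v : EuclideanSpace ℝ (Fin n) → ℝ} (hu : ContDiff ℝ (⊤ : ℕ∞) u)
    (hv : ContDiff ℝ (⊤ : ℕ∞) v) (x : EuclideanSpace ℝ (Fin n)) :
    lap n (fun x => u x - v x) x = lap n u x - lap n v x := by
  have hp : ∀ {u v : EuclideanSpace ℝ (Fin n) → ℝ}, ContDiff ℝ (⊤ : ℕ∞) u →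
      ContDiff ℝ (⊤ : ℕ∞) v → ∀ e, pder e (fun x => u x - v x) =
        fun x => pder e u x - pder e v x := by
    intro u v hu hv e
    funext x
    unfold pder
    rw [fderiv_fun_sub (hu.differentiable (by simp) x) (hv.differentiable (by simp) x)]
    rfl
  rw [lap_eq hu, lap_eq hv, lap_eq (hu.sub hv), ← Finset.sum_sub_distrib]
  refine Finset.sum_congr rfl fun i _ => ?_
  rw [hp hu hv, hp (contDiff_pder hu _) (contDiff_pder hv _)]

/-- Isomorphism property of the flat Laplacian in weighted spaces: for `n ≥ 3` and
`-n/2 < δ < n/2 - 2`, every smooth compactly supported `f : ℝⁿ → ℝ` admits a unique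
smooth solution `u` of `Δu = f` which is square-integrable with weight
`(1+‖x‖²)^δ`. -/
theorem flat_laplacian_isomorphism (n : ℕ) (hn : 3 ≤ n) (δ : ℝ)
    (hδ1 : -(n : ℝ) / 2 < δ) (hδ2 : δ < (n : ℝ) / 2 - 2)
    (f : EuclideanSpace ℝ (Fin n) → ℝ) (hf : ContDiff ℝ (⊤ : ℕ∞) f)
    (hsupp : HasCompactSupport f) :
    ∃! u : EuclideanSpace ℝ (Fin n) → ℝ, ContDiff ℝ (⊤ : ℕ∞) u ∧
      Integrable (fun x : EuclideanSpace ℝ (Fin n) =>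
        (u x) ^ 2 * (1 + ‖x‖ ^ 2) ^ δ) ∧
      ∀ x, lap n u x = f x := by
  obtain ⟨u, hu, hui, hul⟩ := exists_solution hn hδ2 hf hsupp
  refine ⟨u, ⟨hu, hui, hul⟩, fun v ⟨hv, hvi, hvl⟩ => funext fun a => sub_eq_zero.1 ?_⟩
  refine harmonic_eq_zero hn hδ1 (hv.sub hu) ?_ (fun x => ?_) a
  · have hw : Continuous fun x : EuclideanSpace ℝ (Fin n) => (1 + ‖x‖ ^ 2) ^ δ :=
      Continuous.rpow_const (by fun_prop) fun x => Or.inl (by positivity)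
    refine ((hvi.const_mul 2).add (hui.const_mul 2)).mono'
      (((hv.sub hu).continuous.pow 2).mul hw).aestronglyMeasurable
      (Filter.Eventually.of_forall fun x => ?_)
    rw [Real.norm_of_nonneg (by positivity)]
    have h : (v x - u x) ^ 2 ≤ 2 * v x ^ 2 + 2 * u x ^ 2 := by nlinarith [sq_nonneg (v x + u x)]
    calc (v x - u x) ^ 2 * (1 + ‖x‖ ^ 2) ^ δ
        ≤ (2 * v x ^ 2 + 2 * u x ^ 2) * (1 + ‖x‖ ^ 2) ^ δ := by gcongr
      _ = _ := by simp only [Pi.add_apply]; ring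
  · rw [lap_sub hv hu, hvl, hul, sub_self]
end
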